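/- arXiv:0812.2126 — 2 statements merged into one kernel-verified Lean document; each statement's English description precedes it below -/
import Mathlib

section
/- Let ⟨ω₁, …, ω_d⟩ and ⟨ω'₁, …, ω'_d⟩ be d-webs of hypersurfaces (d ≥ n + 2) on connected open sets U, U' ⊆ ℝⁿ, geodesic for torsion-free affine connections Γ and Γ' respectively. Let φ : U → U' be a smooth diffeomorphism mapping the first web onto the second, i.e. for each i the pullback φ*(ω'ᵢ) is a nonvanishing smooth multiple of ωᵢ. Then φ is a projective map with respect to the canonical projective structures: the pullback connection φ*Γ' is projectively equivalent to Γ. -/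
open scoped BigOperators

/-- Partial derivative in the `i`-th coordinate direction. -/
noncomputable def pd {n : ℕ} (i : Fin n) (f : (Fin n → ℝ) → ℝ) (x : Fin n → ℝ) : ℝ :=
  fderiv ℝ f x (Pi.single i 1)

/-- A torsion-free affine connection on `U`, given by its Christoffel symbols `Γ k i j`
(smooth on `U` and symmetric in the lower indices `i j`). -/
def IsTorsionFreeConn {n : ℕ} (U : Set (Fin n → ℝ))
    (Γ : Fin n → Fin n → Fin n → (Fin n → ℝ) → ℝ) : Prop :=
  (∀ k i j, ContDiffOn ℝ (⊤ : ℕ∞) (Γ k i j) U) ∧ (∀ k i j x, Γ k i j x = Γ k j i x)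

/-- `γ` is a geodesic of `Γ` on the set `I ⊆ ℝ`, with image in `U`. -/
def IsGeodesicOn {n : ℕ} (U : Set (Fin n → ℝ))
    (Γ : Fin n → Fin n → Fin n → (Fin n → ℝ) → ℝ)
    (I : Set ℝ) (γ : ℝ → Fin n → ℝ) : Prop :=
  (∀ t ∈ I, γ t ∈ U) ∧ ContDiffOn ℝ 2 γ I ∧
    ∀ t ∈ I, ∀ k, deriv (fun s => deriv (fun u => γ u k) s) t +
      ∑ i, ∑ j, Γ k i j (γ t) * deriv (fun u => γ u i) t * deriv (fun u => γ u j) t = 0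

/-- The codimension-one foliation defined by the `1`-form `ω` is totally geodesic for `Γ`:
every geodesic tangent to a leaf at time `0` stays tangent to the kernel of `ω`. -/
def TotallyGeodesic {n : ℕ} (U : Set (Fin n → ℝ))
    (Γ : Fin n → Fin n → Fin n → (Fin n → ℝ) → ℝ)
    (ω : (Fin n → ℝ) → Fin n → ℝ) : Prop :=
  ∀ I : Set ℝ, IsOpen I → I.OrdConnected → (0 : ℝ) ∈ I →
    ∀ γ : ℝ → Fin n → ℝ, IsGeodesicOn U Γ I γ →
      (∑ k, ω (γ 0) k * deriv (fun u => γ u k) 0) = 0 →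
      ∀ t ∈ I, (∑ k, ω (γ t) k * deriv (fun u => γ u k) t) = 0

/-- `ω` is a smooth nonvanishing `1`-form on `U` satisfying the integrability
condition `ω ∧ dω = 0`. -/
def IsFoliationForm {n : ℕ} (U : Set (Fin n → ℝ)) (ω : (Fin n → ℝ) → Fin n → ℝ) : Prop :=
  ContDiffOn ℝ (⊤ : ℕ∞) ω U ∧ (∀ x ∈ U, ω x ≠ 0) ∧
    ∀ x ∈ U, ∀ i j k,
      ω x i * (pd j (fun y => ω y k) x - pd k (fun y => ω y j) x) +
      ω x j * (pd k (fun y => ω y i) x - pd i (fun y => ω y k) x) +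
      ω x k * (pd i (fun y => ω y j) x - pd j (fun y => ω y i) x) = 0

/-- Components of the symmetric covariant differential `d^s_Γ ω`. -/
noncomputable def dsym {n : ℕ} (Γ : Fin n → Fin n → Fin n → (Fin n → ℝ) → ℝ)
    (ω : (Fin n → ℝ) → Fin n → ℝ) (i j : Fin n) (x : Fin n → ℝ) : ℝ :=
  (pd i (fun y => ω y j) x + pd j (fun y => ω y i) x) / 2 - ∑ k, Γ k i j x * ω x k

/-- Components of the symmetric product `θ·ω` of two `1`-forms. -/
noncomputable def symProd {n : ℕ} (θ ω : (Fin n → ℝ) → Fin n → ℝ) (i j : Fin n) (x : Fin n → ℝ) : ℝ :=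
  (θ x i * ω x j + θ x j * ω x i) / 2

/-- A `d`-web of hypersurfaces on `U`: a family of smooth nonvanishing integrable `1`-forms,
any `n` of which are linearly independent at every point of `U`. -/
def IsWeb {n d : ℕ} (U : Set (Fin n → ℝ)) (ωs : Fin d → (Fin n → ℝ) → Fin n → ℝ) : Prop :=
  (∀ i, IsFoliationForm U (ωs i)) ∧
    ∀ x ∈ U, ∀ σ : Fin n → Fin d, Function.Injective σ →
      LinearIndependent ℝ (fun i => ωs (σ i) x)

/-- `Γ` and `Γ'` are projectively equivalent on `U`:
`Γ'ᵏᵢⱼ = Γᵏᵢⱼ + δᵏᵢ ρⱼ + δᵏⱼ ρᵢ` for some smooth `1`-form `ρ`. -/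
def ProjEquiv {n : ℕ} (U : Set (Fin n → ℝ))
    (Γ Γ' : Fin n → Fin n → Fin n → (Fin n → ℝ) → ℝ) : Prop :=
  ∃ ρ : (Fin n → ℝ) → Fin n → ℝ, ContDiffOn ℝ (⊤ : ℕ∞) ρ U ∧
    ∀ x ∈ U, ∀ k i j, Γ' k i j x =
      Γ k i j x + (if k = i then ρ x j else 0) + (if k = j then ρ x i else 0)

/-- `X` is the frame of vector fields dual to the coframe `ωs` on `U`. -/
def IsDualFrame {n : ℕ} (U : Set (Fin n → ℝ)) (ωs : Fin n → (Fin n → ℝ) → Fin n → ℝ)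
    (X : Fin n → (Fin n → ℝ) → Fin n → ℝ) : Prop :=
  (∀ i, ContDiffOn ℝ (⊤ : ℕ∞) (X i) U) ∧
    ∀ x ∈ U, ∀ i j, (∑ k, ωs i x k * X j x k) = if i = j then 1 else 0

/-- The web invariants `s^a_{ij} = (1/(aᵢ−aⱼ))·(aᵢ ∂ⱼ − aⱼ ∂ᵢ) log (aⱼ/aᵢ)`, where `∂ᵢ`
is derivation along the frame vector field `X i`. -/
noncomputable def sInv {n : ℕ} (X : Fin n → (Fin n → ℝ) → Fin n → ℝ)
    (a : Fin n → (Fin n → ℝ) → ℝ) (i j : Fin n) (x : Fin n → ℝ) : ℝ :=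
  (1 / (a i x - a j x)) *
    (a i x * (fderiv ℝ (a j) x (X j x) / a j x - fderiv ℝ (a i) x (X j x) / a i x) -
     a j x * (fderiv ℝ (a j) x (X i x) / a j x - fderiv ℝ (a i) x (X i x) / a i x))

/-- The curvature tensor `Rᵏₗᵢⱼ` of the connection `Γ`. -/
noncomputable def curv {n : ℕ} (Γ : Fin n → Fin n → Fin n → (Fin n → ℝ) → ℝ)
    (k l i j : Fin n) (x : Fin n → ℝ) : ℝ :=
  pd i (Γ k j l) x - pd j (Γ k i l) x +
    ∑ m, (Γ k i m x * Γ m j l x - Γ k j m x * Γ m i l x)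

/-- The pullback `φ*Γ'` of a connection `Γ'` under a diffeomorphism `φ` with inverse `ψ`:
`(φ*Γ')ᵏᵢⱼ = Σ ∂ᵢφᵃ ∂ⱼφᵇ (Γ'ᶜ_{ab}∘φ) (∂_cψᵏ∘φ) + Σ ∂ᵢ∂ⱼφᶜ (∂_cψᵏ∘φ)`. -/
noncomputable def pullbackConn {n : ℕ} (φ ψ : (Fin n → ℝ) → Fin n → ℝ)
    (Γ' : Fin n → Fin n → Fin n → (Fin n → ℝ) → ℝ)
    (k i j : Fin n) (x : Fin n → ℝ) : ℝ :=
  (∑ p, ∑ q, ∑ c, pd i (fun y => φ y p) x * pd j (fun y => φ y q) x *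
      Γ' c p q (φ x) * pd c (fun y => ψ y k) (φ x)) +
    ∑ c, pd i (fun y => pd j (fun z => φ z c) y) x * pd c (fun y => ψ y k) (φ x)

/-!
Since `φ` carries geodesics of `φ*Γ'` to geodesics of `Γ'`, every `ker ωᵢ` is totally geodesic for
both `Γ` and `φ*Γ'`. Differentiating `ωᵢ(γ̇) = 0` along a geodesic gives `(∇_v ωᵢ)(v) = 0` on
`ker ωᵢ` for both connections, so the quadratic map `v ↦ T(v, v)` of the symmetric difference
tensor `T = φ*Γ' - Γ` preserves each of the `n + 2` hyperplanes `ker ωᵢ` at every point.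

In the basis `(bᵢ)` dual to `n` of the covectors, `T(bᵢ, bⱼ)` then lies in the coordinate plane of
`bᵢ` and `bⱼ`. This plane contains four distinct `T`-invariant lines: the two axes and its
intersections with the two further hyperplanes. The binary cubic form `w ∧ T(w, w)` vanishes on all
four of them, hence identically, and this forces `T(u, v) = ρ(u) v + ρ(v) u`. The covector `ρ` is
the trace of `T` divided by `n + 1`, so it depends smoothly on the point.
-/

section LinearAlgebra

variable {K E : Type*} [Field K] [AddCommGroup E] [Module K E]

/-- Any `n` members of the family `ℓ` are linearly independent; for `n` covectors of an
`n`-dimensional space this is the pointwise condition defining a web. -/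
def InGeneralPosition {ι V : Type*} (R : Type*) [Semiring R] [AddCommMonoid V] [Module R V]
    (n : ℕ) (ℓ : ι → V) : Prop :=
  ∀ σ : Fin n → ι, Function.Injective σ → LinearIndependent R fun i => ℓ (σ i)

/-- The quadratic map `v ↦ T v v` preserves the hyperplane `ker ℓ`. For `T` the difference of two
connections, this is what a hyperplane totally geodesic for both of them satisfies. -/
def PreservesKer (T : E →ₗ[K] E →ₗ[K] E) (ℓ : Module.Dual K E) : Prop :=
  ∀ v, ℓ v = 0 → ℓ (T v v) = 0

namespace InGeneralPosition

variable {ι V R : Type*} {n : ℕ} {ℓ : ι → V}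

lemma comp_injective [Semiring R] [AddCommMonoid V] [Module R V] (hℓ : InGeneralPosition R n ℓ)
    {ι' : Type*} {e : ι' → ι} (he : Function.Injective e) :
    InGeneralPosition R n fun i => ℓ (e i) :=
  fun σ hσ => hℓ (e ∘ σ) (he.comp hσ)

lemma map_injective [Ring R] [AddCommGroup V] [Module R V] {W : Type*} [AddCommGroup W]
    [Module R W] (hℓ : InGeneralPosition R n ℓ) {f : V →ₗ[R] W} (hf : Function.Injective f) :
    InGeneralPosition R n fun i => f (ℓ i) :=
  fun σ hσ => (hℓ σ hσ).map' f (LinearMap.ker_eq_bot.2 hf)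

end InGeneralPosition

lemma eq_zero_of_linearIndependent_dual [FiniteDimensional K E] {κ : Type*} [Fintype κ]
    {ℓ : κ → Module.Dual K E} (hℓ : LinearIndependent K ℓ)
    (hκ : Fintype.card κ = Module.finrank K E) {v : E} (hv : ∀ i, ℓ i v = 0) : v = 0 := by
  have hspan : Submodule.span K (Set.range ℓ) = ⊤ :=
    hℓ.span_eq_top_of_card_eq_finrank' (hκ.trans Subspace.dual_finrank_eq.symm)
  have hle : Submodule.span K (Set.range ℓ) ≤ LinearMap.ker (Module.Dual.eval K E v) :=
    Submodule.span_le.2 (Set.range_subset_iff.2 hv)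
  exact (Module.forall_dual_apply_eq_zero_iff K v).1 fun f => hle (hspan ▸ Submodule.mem_top)

lemma exists_basis_coord_eq [FiniteDimensional K E] {κ : Type*} [Fintype κ]
    {ℓ : κ → Module.Dual K E} (hℓ : LinearIndependent K ℓ)
    (hκ : Fintype.card κ = Module.finrank K E) :
    ∃ b : Module.Basis κ K E, ∀ i, b.coord i = ℓ i := by
  have hinj : Function.Injective (LinearMap.pi ℓ) :=
    (injective_iff_map_eq_zero _).2 fun v hv =>
      eq_zero_of_linearIndependent_dual hℓ hκ fun i => congrFun hv i
  let e : E ≃ₗ[K] (κ → K) :=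
    LinearEquiv.ofInjectiveOfFinrankEq (LinearMap.pi ℓ) hinj (by simp [hκ])
  exact ⟨Module.Basis.ofEquivFun e, fun i => by ext v; rfl⟩

/-- Otherwise `v` would be annihilated by the at least `n` covectors indexed outside `S`. -/
lemma InGeneralPosition.exists_notMem_apply_ne_zero [FiniteDimensional K E] {ι : Type*}
    [Fintype ι] {ℓ : ι → Module.Dual K E} (hℓ : InGeneralPosition K (Module.finrank K E) ℓ)
    {v : E} (hv : v ≠ 0) {S : Finset ι} (hS : S.card + Module.finrank K E ≤ Fintype.card ι) :
    ∃ i ∉ S, ℓ i v ≠ 0 := by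
  classical
  by_contra! hzero
  obtain ⟨R, hRS, hR⟩ : ∃ R ⊆ Sᶜ, R.card = Module.finrank K E :=
    Finset.exists_subset_card_eq (by rw [Finset.card_compl]; omega)
  let σ : Fin (Module.finrank K E) ≃ R := (R.equivFinOfCardEq hR).symm
  refine hv (eq_zero_of_linearIndependent_dual
    (hℓ (fun i => σ i) (Subtype.val_injective.comp σ.injective)) (Fintype.card_fin _) fun i => ?_)
  exact hzero _ (Finset.mem_compl.1 (hRS (σ i).2))

section Tensor

variable {T : E →ₗ[K] E →ₗ[K] E}

lemma PreservesKer.apply_eq_zero [NeZero (2 : K)] {ℓ : Module.Dual K E} (hℓ : PreservesKer T ℓ)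
    (hT : ∀ u v, T u v = T v u) {u v : E} (hu : ℓ u = 0) (hv : ℓ v = 0) : ℓ (T u v) = 0 := by
  have h := hℓ (u + v) (by rw [map_add, hu, hv, add_zero])
  simp only [map_add, LinearMap.add_apply, hℓ u hu, hℓ v hv, hT v u, zero_add, add_zero,
    ← two_mul] at h
  exact (mul_eq_zero.1 h).resolve_left two_ne_zero

/-- Evaluate at `ℓ v • u - ℓ u • v`, which spans the line `ker ℓ` of the plane of `u` and `v`. -/
lemma PreservesKer.cross_relation {ℓ : Module.Dual K E} (hℓ : PreservesKer T ℓ)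
    (hT : ∀ u v, T u v = T v u) {u v : E} {s t x y : K} (hu : T u u = s • u) (hv : T v v = t • v)
    (huv : T u v = x • u + y • v) (hℓu : ℓ u ≠ 0) (hℓv : ℓ v ≠ 0) :
    ℓ u * (t - 2 * x) + ℓ v * (s - 2 * y) = 0 := by
  have h := hℓ (ℓ v • u - ℓ u • v) (by simp only [map_sub, map_smul, smul_eq_mul]; ring)
  simp only [map_sub, map_smul, LinearMap.sub_apply, LinearMap.smul_apply, hT v u, hu, hv, huv,
    map_add, smul_eq_mul] at h
  refine mul_left_cancel₀ (mul_ne_zero hℓu hℓv) ?_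
  linear_combination h

/-- The plane spanned by `u` and `v` contains four invariant lines: those of `u` and `v`, and the
kernels of `p` and `q`. The cubic form `w ∧ T w w` vanishes on all four, hence identically. -/
lemma PreservesKer.apply_eq_of_pair [NeZero (2 : K)] {p q : Module.Dual K E}
    (hp : PreservesKer T p) (hq : PreservesKer T q) (hT : ∀ u v, T u v = T v u) {u v : E}
    {s t x y : K} (hu : T u u = s • u) (hv : T v v = t • v) (huv : T u v = x • u + y • v)
    (hpu : p u ≠ 0) (hpv : p v ≠ 0) (hqu : q u ≠ 0) (hqv : q v ≠ 0)
    (hpq : p v * q u - p u * q v ≠ 0) : T u v = (t / 2) • u + (s / 2) • v := by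
  have hprel := hp.cross_relation hT hu hv huv hpu hpv
  have hqrel := hq.cross_relation hT hu hv huv hqu hqv
  have hx : t - 2 * x = 0 := by
    refine (mul_eq_zero.1 ?_).resolve_left hpq
    linear_combination p v * hqrel - q v * hprel
  have hy : s - 2 * y = 0 := by
    refine (mul_eq_zero.1 ?_).resolve_left hpq
    linear_combination q u * hprel - p u * hqrel
  rw [huv, sub_eq_zero.1 hx, sub_eq_zero.1 hy, mul_div_cancel_left₀ _ two_ne_zero,
    mul_div_cancel_left₀ _ two_ne_zero]

variable {ι : Type*} (b : Module.Basis ι K E)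

lemma apply_basis_self_of_preservesKer_coord (hb : ∀ i, PreservesKer T (b.coord i)) (i : ι) :
    T (b i) (b i) = b.coord i (T (b i) (b i)) • b i := by
  classical
  refine b.ext_elem fun a => ?_
  by_cases hai : a = i
  · subst hai
    simp
  · have hzero := hb a (b i) (by simp [Ne.symm hai])
    simpa [Ne.symm hai] using hzero

lemma apply_basis_of_preservesKer_coord [NeZero (2 : K)] (hT : ∀ u v, T u v = T v u)
    (hb : ∀ i, PreservesKer T (b.coord i)) {i j : ι} (hij : i ≠ j) :
    T (b i) (b j) =
      b.coord i (T (b i) (b j)) • b i + b.coord j (T (b i) (b j)) • b j := by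
  classical
  refine b.ext_elem fun a => ?_
  by_cases hai : a = i
  · subst hai
    simp [hij.symm]
  by_cases haj : a = j
  · subst haj
    simp [hij]
  · have hzero := (hb a).apply_eq_zero hT (u := b i) (v := b j) (by simp [Ne.symm hai])
      (by simp [Ne.symm haj])
    simpa [Ne.symm hai, Ne.symm haj] using hzero

lemma exists_dual_of_apply_basis {t : ι → K}
    (ht : ∀ i j, T (b i) (b j) = (t j / 2) • b i + (t i / 2) • b j) :
    ∃ ρ : Module.Dual K E, ∀ u v, T u v = ρ u • v + ρ v • u := by
  let ρ : Module.Dual K E := b.constr K fun i => t i / 2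
  have hρ : T = LinearMap.lsmul K E ∘ₗ ρ + (LinearMap.lsmul K E ∘ₗ ρ).flip :=
    LinearMap.ext_basis b b fun i j => by simp [ρ, ht, add_comm]
  exact ⟨ρ, fun u v => LinearMap.congr_fun₂ hρ u v⟩

theorem exists_dual_of_preservesKer_coord [NeZero (2 : K)] (hT : ∀ u v, T u v = T v u)
    (hb : ∀ i, PreservesKer T (b.coord i)) {p q : Module.Dual K E} (hp : PreservesKer T p)
    (hq : PreservesKer T q) (hpb : ∀ i, p (b i) ≠ 0) (hqb : ∀ i, q (b i) ≠ 0)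
    (hpq : ∀ i j, i ≠ j → p (b j) * q (b i) - p (b i) * q (b j) ≠ 0) :
    ∃ ρ : Module.Dual K E, ∀ u v, T u v = ρ u • v + ρ v • u := by
  have hself := apply_basis_self_of_preservesKer_coord b hb
  refine exists_dual_of_apply_basis b (t := fun i => b.coord i (T (b i) (b i))) fun i j => ?_
  rcases eq_or_ne i j with rfl | hij
  · rw [← add_smul, add_halves]
    exact hself i
  · exact hp.apply_eq_of_pair hq hT (hself i) (hself j)
      (apply_basis_of_preservesKer_coord b hT hb hij) (hpb i) (hpb j) (hqb i) (hqb j) (hpq i j hij)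

end Tensor

namespace InGeneralPosition

variable {n : ℕ} {b : Module.Basis (Fin n) K E} {ℓ : Fin n ⊕ Fin 2 → Module.Dual K E}

lemma exists_notMem_pair_apply_ne_zero (hℓ : InGeneralPosition K n ℓ)
    [FiniteDimensional K E] (hn : Module.finrank K E = n) {v : E} (hv : v ≠ 0)
    (i j : Fin n ⊕ Fin 2) : ∃ a, a ≠ i ∧ a ≠ j ∧ ℓ a v ≠ 0 := by
  classical
  subst hn
  have hcard : ({i, j} : Finset (Fin (Module.finrank K E) ⊕ Fin 2)).card +
      Module.finrank K E ≤ Fintype.card (Fin (Module.finrank K E) ⊕ Fin 2) := by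
    rw [Fintype.card_sum, Fintype.card_fin, Fintype.card_fin, add_comm]
    gcongr
    exact Finset.card_le_two
  obtain ⟨a, ha, hne⟩ := hℓ.exists_notMem_apply_ne_zero hv hcard
  simp only [Finset.mem_insert, Finset.mem_singleton, not_or] at ha
  exact ⟨a, ha.1, ha.2, hne⟩

lemma apply_inr_basis_ne_zero (hℓ : InGeneralPosition K n ℓ)
    (hb : ∀ i, b.coord i = ℓ (.inl i)) (r : Fin 2) (i : Fin n) : ℓ (.inr r) (b i) ≠ 0 := by
  have := Module.Finite.of_basis b
  obtain ⟨a | r', hai, har, hne⟩ := hℓ.exists_notMem_pair_apply_ne_zero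
    (by simp [Module.finrank_eq_card_basis b]) (b.ne_zero i)
    (.inl i) (.inr (1 - r))
  · have hia : i ≠ a := fun h => hai (h ▸ rfl)
    simp [← hb, hia] at hne
  · have hr : r' = r := by
      have : r' ≠ 1 - r := fun h => har (h ▸ rfl)
      omega
    exact hr ▸ hne

/-- If the minor vanished, the nonzero vector `p (b j) • b i - p (b i) • b j` would be annihilated
by `p`, by `q` and by the remaining `n - 2` coordinates. -/
lemma minor_ne_zero (hℓ : InGeneralPosition K n ℓ) (hb : ∀ i, b.coord i = ℓ (.inl i))
    {i j : Fin n} (hij : i ≠ j) :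
    ℓ (.inr 0) (b j) * ℓ (.inr 1) (b i) - ℓ (.inr 0) (b i) * ℓ (.inr 1) (b j) ≠ 0 := by
  have := Module.Finite.of_basis b
  set w := ℓ (.inr 0) (b j) • b i - ℓ (.inr 0) (b i) • b j with hw
  have happly : ∀ a, ℓ a w = ℓ (.inr 0) (b j) * ℓ a (b i) - ℓ (.inr 0) (b i) * ℓ a (b j) :=
    fun a => by simp only [hw, map_sub, map_smul, smul_eq_mul]
  have hw0 : w ≠ 0 := fun h => hℓ.apply_inr_basis_ne_zero hb 0 j <| by
    simpa [hw, hij.symm] using congrArg (b.coord i) h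
  obtain ⟨a | r, hai, haj, hne⟩ := hℓ.exists_notMem_pair_apply_ne_zero
    (by simp [Module.finrank_eq_card_basis b]) hw0 (.inl i) (.inl j)
  · have hia : i ≠ a := fun h => hai (h ▸ rfl)
    have hja : j ≠ a := fun h => haj (h ▸ rfl)
    exact absurd (by rw [happly]; simp [← hb, hia, hja]) hne
  · rw [happly] at hne
    match r with
    | 0 => exact absurd (by ring) hne
    | 1 => exact hne

end InGeneralPosition

theorem exists_dual_of_preservesKer [NeZero (2 : K)] [FiniteDimensional K E]
    {T : E →ₗ[K] E →ₗ[K] E} (hT : ∀ u v, T u v = T v u) {ι : Type*} [Fintype ι]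
    {ℓ : ι → Module.Dual K E} (hℓ : InGeneralPosition K (Module.finrank K E) ℓ)
    (hι : Module.finrank K E + 2 ≤ Fintype.card ι) (hker : ∀ i, PreservesKer T (ℓ i)) :
    ∃ ρ : Module.Dual K E, ∀ u v, T u v = ρ u • v + ρ v • u := by
  obtain ⟨e⟩ : Nonempty (Fin (Module.finrank K E) ⊕ Fin 2 ↪ ι) :=
    Function.Embedding.nonempty_of_card_le (by simpa using hι)
  have hℓe := hℓ.comp_injective e.injective
  obtain ⟨b, hb⟩ := exists_basis_coord_eq (hℓe _ Sum.inl_injective) (Fintype.card_fin _)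
  exact exists_dual_of_preservesKer_coord b hT (fun i => hb i ▸ hker _) (hker (e (.inr 0)))
    (hker (e (.inr 1))) (hℓe.apply_inr_basis_ne_zero hb 0) (hℓe.apply_inr_basis_ne_zero hb 1)
    fun i j hij => hℓe.minor_ne_zero hb hij

end LinearAlgebra

section PartialDerivatives

variable {n : ℕ} {x : Fin n → ℝ}

lemma pd_apply_eq_fderiv {f : (Fin n → ℝ) → Fin n → ℝ} (hf : DifferentiableAt ℝ f x)
    (i k : Fin n) : pd i (fun y => f y k) x = fderiv ℝ f x (Pi.single i 1) k := by
  rw [pd, (hasFDerivAt_pi'.1 hf.hasFDerivAt k).fderiv]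
  rfl

lemma fderiv_apply_eq_sum_pd {f : (Fin n → ℝ) → Fin n → ℝ} (hf : DifferentiableAt ℝ f x)
    (v : Fin n → ℝ) (k : Fin n) : fderiv ℝ f x v k = ∑ i, v i * pd i (fun y => f y k) x := by
  simp only [pd_apply_eq_fderiv hf]
  conv_lhs => rw [pi_eq_sum_univ' v]
  simp only [map_sum, map_smul, Finset.sum_apply, Pi.smul_apply, smul_eq_mul]

lemma pd_pd_apply_eq_fderiv {f : (Fin n → ℝ) → Fin n → ℝ} (hf : ContDiffAt ℝ 2 f x)
    (i j k : Fin n) :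
    pd i (fun y => pd j (fun z => f z k) y) x =
      fderiv ℝ (fderiv ℝ f) x (Pi.single i 1) (Pi.single j 1) k := by
  have hpd : (fun y => pd j (fun z => f z k) y) =ᶠ[nhds x]
      fun y => fderiv ℝ f y (Pi.single j 1) k := by
    filter_upwards [hf.eventually (by simp)] with y hy
    exact pd_apply_eq_fderiv (hy.differentiableAt (by simp)) j k
  have hf' : DifferentiableAt ℝ (fderiv ℝ f) x :=
    (hf.fderiv_right (m := 1) (by norm_num)).differentiableAt (by simp)
  have happly : HasFDerivAt (fun y => fderiv ℝ f y (Pi.single j 1))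
      ((fderiv ℝ (fderiv ℝ f) x).flip (Pi.single j 1)) x := by
    simpa using hf'.hasFDerivAt.clm_apply (hasFDerivAt_const (Pi.single j 1) x)
  rw [pd, hpd.fderiv_eq, (hasFDerivAt_pi'.1 happly k).fderiv]
  rfl

lemma contDiffOn_pd {U : Set (Fin n → ℝ)} {f : (Fin n → ℝ) → ℝ}
    (hf : ContDiffOn ℝ (⊤ : ℕ∞) f U) (hU : IsOpen U) (i : Fin n) :
    ContDiffOn ℝ (⊤ : ℕ∞) (pd i f) U :=
  (hf.fderiv_of_isOpen hU (by simp)).clm_apply contDiffOn_const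

end PartialDerivatives

section Calculus

variable {𝕜 : Type*} [NontriviallyNormedField 𝕜]

lemma fderiv_apply_fderiv_of_rightInverse {E F : Type*} [NormedAddCommGroup E] [NormedSpace 𝕜 E]
    [NormedAddCommGroup F] [NormedSpace 𝕜 F] {f : E → F} {g : F → E} {x : E}
    (hf : DifferentiableAt 𝕜 f x) (hg : DifferentiableAt 𝕜 g (f x)) (hgf : g (f x) = x)
    (hfg : f ∘ g =ᶠ[nhds (f x)] id) (z : F) : fderiv 𝕜 f x (fderiv 𝕜 g (f x) z) = z := by
  have hcomp : fderiv 𝕜 (f ∘ g) (f x) = (fderiv 𝕜 f x).comp (fderiv 𝕜 g (f x)) := by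
    rw [fderiv_comp _ (by rwa [hgf]) hg, hgf]
  rw [hfg.fderiv_eq, fderiv_id] at hcomp
  exact (DFunLike.congr_fun hcomp z).symm

lemma hasDerivAt_dotProduct {ι : Type*} [Fintype ι] {a b : 𝕜 → ι → 𝕜} {a' b' : ι → 𝕜} {t : 𝕜}
    (ha : HasDerivAt a a' t) (hb : HasDerivAt b b' t) :
    HasDerivAt (fun s => a s ⬝ᵥ b s) (a' ⬝ᵥ b t + a t ⬝ᵥ b') t := by
  simp only [dotProduct, ← Finset.sum_add_distrib]
  exact HasDerivAt.fun_sum fun k _ => (hasDerivAt_pi.1 ha k).mul (hasDerivAt_pi.1 hb k)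

end Calculus

section Christoffel

variable {K : Type*} [CommRing K] {ι : Type*} [Fintype ι]

/-- The bilinear map `(u, v) ↦ ∑ᵢⱼ Gᵏᵢⱼ uⁱ vʲ` with coefficients the Christoffel symbols `G k i j`
of a connection at a point; the geodesic equation reads `γ̈ = -christoffelMap G γ̇ γ̇`. -/
noncomputable def christoffelMap (G : ι → ι → ι → K) : (ι → K) →ₗ[K] (ι → K) →ₗ[K] (ι → K) :=
  (Pi.basisFun K ι).constr K fun i => (Pi.basisFun K ι).constr K fun j k => G k i j

lemma christoffelMap_apply (G : ι → ι → ι → K) (u v : ι → K) (k : ι) :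
    christoffelMap G u v k = ∑ i, ∑ j, G k i j * u i * v j := by
  simp only [christoffelMap, Module.Basis.constr_apply_fintype, LinearMap.sum_apply,
    LinearMap.smul_apply, Finset.sum_apply, Pi.smul_apply, Pi.basisFun_equivFun,
    LinearEquiv.refl_apply, smul_eq_mul, Finset.mul_sum]
  exact Finset.sum_congr rfl fun i _ => Finset.sum_congr rfl fun j _ => by ring

lemma christoffelMap_single [DecidableEq ι] (G : ι → ι → ι → K) (i j k : ι) :
    christoffelMap G (Pi.single i 1) (Pi.single j 1) k = G k i j := by
  simp [christoffelMap_apply, Pi.single_apply]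

lemma christoffelMap_eq [DecidableEq ι] {G : ι → ι → ι → K}
    {B : (ι → K) →ₗ[K] (ι → K) →ₗ[K] (ι → K)}
    (h : ∀ i j k, B (Pi.single i 1) (Pi.single j 1) k = G k i j) : christoffelMap G = B := by
  refine LinearMap.ext_basis (Pi.basisFun K ι) (Pi.basisFun K ι) fun i j => funext fun k => ?_
  simp only [Pi.basisFun_apply, christoffelMap_single, h]

lemma christoffelMap_comm {G : ι → ι → ι → K} (hG : ∀ k i j, G k i j = G k j i) (u v : ι → K) :
    christoffelMap G u v = christoffelMap G v u := by
  ext k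
  rw [christoffelMap_apply, christoffelMap_apply, Finset.sum_comm]
  exact Finset.sum_congr rfl fun j _ => Finset.sum_congr rfl fun i _ => by rw [hG]; ring

end Christoffel

section Geodesics

variable {n : ℕ} {U : Set (Fin n → ℝ)} {Γ : Fin n → Fin n → Fin n → (Fin n → ℝ) → ℝ} {I : Set ℝ}
  {γ : ℝ → Fin n → ℝ}

lemma hasDerivAt_deriv_of_contDiffAt {γ : ℝ → Fin n → ℝ} {t : ℝ} (hγ : ContDiffAt ℝ 2 γ t) :
    HasDerivAt (deriv γ) (fun k => deriv (fun s => deriv (fun u => γ u k) s) t) t := by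
  have h : ContDiffAt ℝ 1 (deriv γ) t := by
    have := hγ.fderiv_right (m := 1) (by norm_num)
    exact this.clm_apply contDiffAt_const
  have hd : DifferentiableAt ℝ (deriv γ) t := h.differentiableAt (by simp)
  refine hasDerivAt_pi.2 fun k => ?_
  have hev : (fun s => deriv (fun u => γ u k) s) =ᶠ[nhds t] fun s => deriv γ s k := by
    filter_upwards [hγ.eventually (by simp)] with s hs
    exact (hasDerivAt_pi.1 (hs.differentiableAt (by simp)).hasDerivAt k).deriv
  rw [hev.deriv_eq]
  exact (hasDerivAt_pi.1 hd.hasDerivAt k).differentiableAt.hasDerivAt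

lemma isGeodesicOn_iff (hI : IsOpen I) :
    IsGeodesicOn U Γ I γ ↔ Set.MapsTo γ I U ∧ ContDiffOn ℝ 2 γ I ∧ ∀ t ∈ I,
      deriv (deriv γ) t = -christoffelMap (fun k i j => Γ k i j (γ t)) (deriv γ t) (deriv γ t) := by
  refine and_congr_right fun _ => and_congr_right fun hγ => forall₂_congr fun t ht => ?_
  have hγt := hγ.contDiffAt (hI.mem_nhds ht)
  have hd : ∀ i, deriv (fun u => γ u i) t = deriv γ t i := fun i =>
    (hasDerivAt_pi.1 (hγt.differentiableAt (by simp)).hasDerivAt i).deriv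
  simp only [(hasDerivAt_deriv_of_contDiffAt hγt).deriv, funext_iff, hd, eq_neg_iff_add_eq_zero,
    Pi.add_apply, Pi.zero_apply, christoffelMap_apply]

lemma IsGeodesicOn.hasDerivAt (hγ : IsGeodesicOn U Γ I γ) (hI : IsOpen I) {t : ℝ} (ht : t ∈ I) :
    HasDerivAt γ (deriv γ t) t :=
  ((hγ.2.1.contDiffAt (hI.mem_nhds ht)).differentiableAt (by simp)).hasDerivAt

lemma IsGeodesicOn.hasDerivAt_deriv (hγ : IsGeodesicOn U Γ I γ) (hI : IsOpen I) {t : ℝ}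
    (ht : t ∈ I) : HasDerivAt (deriv γ)
      (-christoffelMap (fun k i j => Γ k i j (γ t)) (deriv γ t) (deriv γ t)) t := by
  have h := hasDerivAt_deriv_of_contDiffAt (hγ.2.1.contDiffAt (hI.mem_nhds ht))
  rw [← ((isGeodesicOn_iff hI).1 hγ).2.2 t ht]
  exact h.differentiableAt.hasDerivAt

/-- The geodesic equation as a first-order system on the tangent bundle `U × ℝⁿ`: the projections
of the integral curves of this vector field are the geodesics of `Γ`. -/
noncomputable def geodesicSpray (Γ : Fin n → Fin n → Fin n → (Fin n → ℝ) → ℝ)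
    (p : (Fin n → ℝ) × (Fin n → ℝ)) : (Fin n → ℝ) × (Fin n → ℝ) :=
  (p.2, -christoffelMap (fun k i j => Γ k i j p.1) p.2 p.2)

lemma contDiffOn_geodesicSpray {m : WithTop ℕ∞} (hΓ : ∀ k i j, ContDiffOn ℝ m (Γ k i j) U) :
    ContDiffOn ℝ m (geodesicSpray Γ) (U ×ˢ Set.univ) := by
  refine contDiff_snd.contDiffOn.prodMk (ContDiffOn.neg (contDiffOn_pi.2 fun k => ?_))
  simp only [christoffelMap_apply]
  refine ContDiffOn.sum fun i _ => ContDiffOn.sum fun j _ =>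
    ContDiffOn.mul (ContDiffOn.mul ?_ ?_) ?_
  · exact (hΓ k i j).comp contDiffOn_fst fun p hp => hp.1
  · exact ((contDiff_apply ℝ ℝ i).comp contDiff_snd).contDiffOn
  · exact ((contDiff_apply ℝ ℝ j).comp contDiff_snd).contDiffOn

lemma isGeodesicOn_fst_of_hasDerivAt_geodesicSpray (hΓ : ∀ k i j, ContinuousOn (Γ k i j) U)
    (hI : IsOpen I) {α : ℝ → (Fin n → ℝ) × (Fin n → ℝ)} (hαU : ∀ t ∈ I, (α t).1 ∈ U)
    (hα : ∀ t ∈ I, HasDerivAt α (geodesicSpray Γ (α t)) t) :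
    IsGeodesicOn U Γ I fun t => (α t).1 := by
  have hfst : ∀ t ∈ I, HasDerivAt (fun s => (α s).1) (α t).2 t := fun t ht => (hα t ht).fst
  have hα1 : ContDiffOn ℝ 1 α I := by
    rw [← zero_add (1 : WithTop ℕ∞), contDiffOn_succ_iff_deriv_of_isOpen hI, contDiffOn_zero]
    refine ⟨fun t ht => (hα t ht).differentiableAt.differentiableWithinAt, by simp, ?_⟩
    have hspray : ContinuousOn (geodesicSpray Γ) (U ×ˢ Set.univ) :=
      (contDiffOn_geodesicSpray fun k i j => contDiffOn_zero.2 (hΓ k i j)).continuousOn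
    exact (hspray.comp (fun t ht => (hα t ht).continuousAt.continuousWithinAt)
      fun t ht => ⟨hαU t ht, Set.mem_univ _⟩).congr fun t ht => (hα t ht).deriv
  refine (isGeodesicOn_iff hI).2 ⟨hαU, ?_, fun t ht => ?_⟩
  · rw [← one_add_one_eq_two, contDiffOn_succ_iff_deriv_of_isOpen hI]
    exact ⟨fun t ht => (hfst t ht).differentiableAt.differentiableWithinAt, by simp,
      hα1.snd.congr fun t ht => (hfst t ht).deriv⟩
  · have hderiv : deriv (fun s => (α s).1) =ᶠ[nhds t] fun s => (α s).2 := by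
      filter_upwards [hI.mem_nhds ht] with s hs using (hfst s hs).deriv
    rw [hderiv.deriv_eq, hderiv.eq_of_nhds]
    have hsnd : HasDerivAt (fun s => (α s).2) (geodesicSpray Γ (α t)).2 t := (hα t ht).snd
    exact hsnd.deriv

lemma exists_isGeodesicOn (hU : IsOpen U) (hΓ : ∀ k i j, ContDiffOn ℝ 1 (Γ k i j) U)
    {x : Fin n → ℝ} (hx : x ∈ U) (v : Fin n → ℝ) :
    ∃ ε > 0, ∃ γ, IsGeodesicOn U Γ (Set.Ioo (-ε) ε) γ ∧ γ 0 = x ∧ deriv γ 0 = v := by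
  have hUuniv : U ×ˢ Set.univ ∈ nhds (x, v) :=
    (hU.prod isOpen_univ).mem_nhds ⟨hx, Set.mem_univ v⟩
  obtain ⟨α, hα0, ε₁, hε₁, hα⟩ := ((contDiffOn_geodesicSpray hΓ).contDiffAt hUuniv)
    |>.exists_forall_mem_closedBall_exists_eq_forall_mem_Ioo_hasDerivAt₀ 0
  rw [zero_sub, zero_add] at hα
  have hαU : ∀ᶠ t in nhds 0, α t ∈ U ×ˢ Set.univ :=
    (hα 0 ⟨neg_neg_iff_pos.2 hε₁, hε₁⟩).continuousAt (hα0 ▸ hUuniv)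
  obtain ⟨ε₂, hε₂, hball⟩ := Metric.eventually_nhds_iff_ball.1 hαU
  simp only [Real.ball_eq_Ioo, zero_sub, zero_add] at hball
  have hα' : ∀ t ∈ Set.Ioo (-min ε₁ ε₂) (min ε₁ ε₂), HasDerivAt α (geodesicSpray Γ (α t)) t :=
    fun t ht => hα t (Set.Ioo_subset_Ioo (neg_le_neg (min_le_left _ _)) (min_le_left _ _) ht)
  have hε : 0 < min ε₁ ε₂ := lt_min hε₁ hε₂
  refine ⟨min ε₁ ε₂, hε, fun t => (α t).1,
    isGeodesicOn_fst_of_hasDerivAt_geodesicSpray (fun k i j => (hΓ k i j).continuousOn) isOpen_Ioo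
      (fun t ht => ?_) hα', congrArg Prod.fst hα0, ?_⟩
  · exact (hball t (Set.Ioo_subset_Ioo (neg_le_neg (min_le_right _ _)) (min_le_right _ _) ht)).1
  · have hfst : HasDerivAt (fun t => (α t).1) (α 0).2 0 :=
      (hα' 0 ⟨neg_neg_iff_pos.2 hε, hε⟩).fst
    rw [hfst.deriv, hα0]

end Geodesics

section TotallyGeodesic

variable {n : ℕ} {U : Set (Fin n → ℝ)} {Γ : Fin n → Fin n → Fin n → (Fin n → ℝ) → ℝ}
  {ω : (Fin n → ℝ) → Fin n → ℝ}

lemma totallyGeodesic_iff :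
    TotallyGeodesic U Γ ω ↔ ∀ I : Set ℝ, IsOpen I → I.OrdConnected → (0 : ℝ) ∈ I →
      ∀ γ : ℝ → Fin n → ℝ, IsGeodesicOn U Γ I γ → ω (γ 0) ⬝ᵥ deriv γ 0 = 0 →
        ∀ t ∈ I, ω (γ t) ⬝ᵥ deriv γ t = 0 := by
  refine forall₅_congr fun I hI _ h0 γ => forall_congr' fun hγ => ?_
  have hderiv : ∀ t ∈ I, ∀ k, deriv (fun u => γ u k) t = deriv γ t k := fun t ht k =>
    (hasDerivAt_pi.1 (hγ.hasDerivAt hI ht) k).deriv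
  simp only [hderiv 0 h0, dotProduct]
  exact imp_congr_right fun _ => forall₂_congr fun t ht => by simp only [hderiv t ht]

/-- Differentiate `ω(γ̇) = 0` at time `0` along the geodesic `γ` with initial velocity `v`; the
identity says that `(∇_v ω)(v) = 0`. -/
lemma TotallyGeodesic.fderiv_dotProduct_eq (hg : TotallyGeodesic U Γ ω) (hU : IsOpen U)
    (hΓ : ∀ k i j, ContDiffOn ℝ 1 (Γ k i j) U) {x : Fin n → ℝ} (hx : x ∈ U)
    (hω : DifferentiableAt ℝ ω x) {v : Fin n → ℝ} (hv : ω x ⬝ᵥ v = 0) :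
    fderiv ℝ ω x v ⬝ᵥ v = ω x ⬝ᵥ christoffelMap (fun k i j => Γ k i j x) v v := by
  obtain ⟨ε, hε, γ, hγ, rfl, rfl⟩ := exists_isGeodesicOn hU hΓ hx v
  have h0 : (0 : ℝ) ∈ Set.Ioo (-ε) ε := ⟨neg_neg_iff_pos.2 hε, hε⟩
  have htangent : (fun t => ω (γ t) ⬝ᵥ deriv γ t) =ᶠ[nhds 0] fun _ => 0 := by
    filter_upwards [isOpen_Ioo.mem_nhds h0] with t ht
    exact totallyGeodesic_iff.1 hg _ isOpen_Ioo Set.ordConnected_Ioo h0 γ hγ hv t ht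
  have hderiv := hasDerivAt_dotProduct
    (hω.hasFDerivAt.comp_hasDerivAt 0 (hγ.hasDerivAt isOpen_Ioo h0))
    (hγ.hasDerivAt_deriv isOpen_Ioo h0)
  have hzero := hderiv.unique ((hasDerivAt_const (0 : ℝ) (0 : ℝ)).congr_of_eventuallyEq htangent)
  rwa [dotProduct_neg, add_neg_eq_zero] at hzero

end TotallyGeodesic

section ProjectiveEquivalence

variable {n : ℕ} {U : Set (Fin n → ℝ)} {Γ Γ₁ Γ₂ : Fin n → Fin n → Fin n → (Fin n → ℝ) → ℝ}

/-- A torsion-free affine connection on `U`. In contrast to `IsTorsionFreeConn`, the symmetry in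
the lower indices is required on `U` only: a pullback connection need not be symmetric elsewhere. -/
structure IsTorsionFreeConnOn (U : Set (Fin n → ℝ))
    (Γ : Fin n → Fin n → Fin n → (Fin n → ℝ) → ℝ) : Prop where
  contDiffOn : ∀ k i j, ContDiffOn ℝ (⊤ : ℕ∞) (Γ k i j) U
  symm : ∀ x ∈ U, ∀ k i j, Γ k i j x = Γ k j i x

lemma IsTorsionFreeConn.isTorsionFreeConnOn (hΓ : IsTorsionFreeConn U Γ) :
    IsTorsionFreeConnOn U Γ :=
  ⟨hΓ.1, fun x _ k i j => hΓ.2 k i j x⟩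

lemma projEquiv_of_forall_exists (hΓ₁ : ∀ k i j, ContDiffOn ℝ (⊤ : ℕ∞) (Γ₁ k i j) U)
    (hΓ₂ : ∀ k i j, ContDiffOn ℝ (⊤ : ℕ∞) (Γ₂ k i j) U)
    (h : ∀ x ∈ U, ∃ ρ : Fin n → ℝ, ∀ k i j, Γ₂ k i j x =
      Γ₁ k i j x + (if k = i then ρ j else 0) + (if k = j then ρ i else 0)) :
    ProjEquiv U Γ₁ Γ₂ := by
  refine ⟨fun x j => (∑ k, (Γ₂ k k j x - Γ₁ k k j x)) / (n + 1), ?_, fun x hx k i j => ?_⟩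
  · exact contDiffOn_pi.2 fun j =>
      (ContDiffOn.sum fun k _ => (hΓ₂ k k j).sub (hΓ₁ k k j)).div_const _
  · obtain ⟨ρ, hρ⟩ := h x hx
    have htrace : ∀ j, (∑ k, (Γ₂ k k j x - Γ₁ k k j x)) / (n + 1) = ρ j := fun j => by
      rw [div_eq_iff (by positivity)]
      simp only [hρ, if_true, add_assoc, add_sub_cancel_left, Finset.sum_add_distrib,
        Finset.sum_const, Finset.card_univ, Fintype.card_fin, nsmul_eq_mul, Finset.sum_ite_eq',
        Finset.mem_univ]
      ring
    beta_reduce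
    rw [htrace, htrace, hρ]

lemma exists_eq_of_preservesKer {ι : Type*} [Fintype ι] (hι : n + 2 ≤ Fintype.card ι)
    {G₁ G₂ : Fin n → Fin n → Fin n → ℝ} (hG₁ : ∀ k i j, G₁ k i j = G₁ k j i)
    (hG₂ : ∀ k i j, G₂ k i j = G₂ k j i) {a : ι → Fin n → ℝ} (ha : InGeneralPosition ℝ n a)
    (hker : ∀ i v, a i ⬝ᵥ v = 0 → a i ⬝ᵥ christoffelMap G₁ v v = a i ⬝ᵥ christoffelMap G₂ v v) :
    ∃ ρ : Fin n → ℝ, ∀ k i j,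
      G₂ k i j = G₁ k i j + (if k = i then ρ j else 0) + (if k = j then ρ i else 0) := by
  have hpos : InGeneralPosition ℝ (Module.finrank ℝ (Fin n → ℝ))
      fun i => dotProductEquiv ℝ (Fin n) (a i) := by
    rw [Module.finrank_fin_fun]
    exact ha.map_injective (f := (dotProductEquiv ℝ (Fin n)).toLinearMap)
      (dotProductEquiv ℝ (Fin n)).injective
  obtain ⟨ρ, hρ⟩ := exists_dual_of_preservesKer (T := christoffelMap G₂ - christoffelMap G₁)
    (fun u v => by
      simp only [LinearMap.sub_apply, christoffelMap_comm hG₁ u, christoffelMap_comm hG₂ u])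
    hpos (by rwa [Module.finrank_fin_fun]) fun i v hv => by
      simpa [dotProduct_sub, sub_eq_zero] using (hker i v hv).symm
  refine ⟨fun i => ρ (Pi.single i 1), fun k i j => ?_⟩
  have hkij := congrFun (hρ (Pi.single i 1) (Pi.single j 1)) k
  simp only [LinearMap.sub_apply, Pi.sub_apply, christoffelMap_single, Pi.add_apply, Pi.smul_apply,
    Pi.single_apply, smul_eq_mul, mul_ite, mul_one, mul_zero] at hkij
  linarith

theorem projEquiv_of_totallyGeodesic {ι : Type*} [Fintype ι] (hι : n + 2 ≤ Fintype.card ι)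
    (hU : IsOpen U) (hΓ₁ : IsTorsionFreeConnOn U Γ₁) (hΓ₂ : IsTorsionFreeConnOn U Γ₂)
    {ωs : ι → (Fin n → ℝ) → Fin n → ℝ} (hω : ∀ i, DifferentiableOn ℝ (ωs i) U)
    (hpos : ∀ x ∈ U, InGeneralPosition ℝ n fun i => ωs i x)
    (hg₁ : ∀ i, TotallyGeodesic U Γ₁ (ωs i)) (hg₂ : ∀ i, TotallyGeodesic U Γ₂ (ωs i)) :
    ProjEquiv U Γ₁ Γ₂ := by
  refine projEquiv_of_forall_exists hΓ₁.contDiffOn hΓ₂.contDiffOn fun x hx =>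
    exists_eq_of_preservesKer hι (hΓ₁.symm x hx) (hΓ₂.symm x hx) (hpos x hx) fun i v hv => ?_
  have hωx := (hω i).differentiableAt (hU.mem_nhds hx)
  rw [← (hg₁ i).fderiv_dotProduct_eq hU (fun k i j => (hΓ₁.contDiffOn k i j).of_le (by simp)) hx
      hωx hv,
    (hg₂ i).fderiv_dotProduct_eq hU (fun k i j => (hΓ₂.contDiffOn k i j).of_le (by simp)) hx hωx hv]

end ProjectiveEquivalence

section Pullback

variable {n : ℕ} {U U' : Set (Fin n → ℝ)} {φ ψ : (Fin n → ℝ) → Fin n → ℝ} {x : Fin n → ℝ}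

lemma dotProduct_fderiv_eq_zero_iff (hφ : DifferentiableAt ℝ φ x) {a b : Fin n → ℝ} {s : ℝ}
    (hs : s ≠ 0) (h : ∀ m, ∑ c, a c * pd m (fun y => φ y c) x = s * b m) (w : Fin n → ℝ) :
    a ⬝ᵥ fderiv ℝ φ x w = 0 ↔ b ⬝ᵥ w = 0 := by
  have hpull : a ⬝ᵥ fderiv ℝ φ x w = s * (b ⬝ᵥ w) := by
    simp only [dotProduct, fderiv_apply_eq_sum_pd hφ, Finset.mul_sum]
    rw [Finset.sum_comm]
    refine Finset.sum_congr rfl fun m _ => ?_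
    rw [← mul_assoc, ← h m, Finset.sum_mul]
    exact Finset.sum_congr rfl fun c _ => by ring
  rw [hpull, mul_eq_zero_iff_left hs]

lemma christoffelMap_pullbackConn (hφ : ContDiffAt ℝ 2 φ x) (hψ : DifferentiableAt ℝ ψ (φ x))
    (Γ' : Fin n → Fin n → Fin n → (Fin n → ℝ) → ℝ) (u v : Fin n → ℝ) :
    christoffelMap (fun k i j => pullbackConn φ ψ Γ' k i j x) u v =
      fderiv ℝ ψ (φ x)
        (christoffelMap (fun c p q => Γ' c p q (φ x)) (fderiv ℝ φ x u) (fderiv ℝ φ x v) +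
          fderiv ℝ (fderiv ℝ φ) x u v) := by
  let B : (Fin n → ℝ) →ₗ[ℝ] (Fin n → ℝ) →ₗ[ℝ] (Fin n → ℝ) :=
    ((christoffelMap fun c p q => Γ' c p q (φ x)).compl₁₂
        (fderiv ℝ φ x).toLinearMap (fderiv ℝ φ x).toLinearMap +
      (fderiv ℝ (fderiv ℝ φ) x).toLinearMap₁₂).compr₂ (fderiv ℝ ψ (φ x)).toLinearMap
  have hB : ∀ u v, B u v = fderiv ℝ ψ (φ x)
        (christoffelMap (fun c p q => Γ' c p q (φ x)) (fderiv ℝ φ x u) (fderiv ℝ φ x v) +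
          fderiv ℝ (fderiv ℝ φ) x u v) := fun u v => rfl
  rw [← hB]
  refine LinearMap.congr_fun₂ (christoffelMap_eq fun i j k => ?_) u v
  rw [hB, fderiv_apply_eq_sum_pd hψ, pullbackConn]
  simp only [pd_pd_apply_eq_fderiv hφ, christoffelMap_apply, Pi.add_apply,
    Finset.sum_add_distrib, pd_apply_eq_fderiv (hφ.differentiableAt (by simp)), add_mul,
    Finset.sum_mul]
  congr 1
  rw [Finset.sum_comm]
  refine Finset.sum_congr rfl fun p _ => ?_
  rw [Finset.sum_comm]
  exact Finset.sum_congr rfl fun q _ => Finset.sum_congr rfl fun c _ => by ring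

variable {Γ' : Fin n → Fin n → Fin n → (Fin n → ℝ) → ℝ}

lemma pullbackConn_symm (hφ : ContDiffAt ℝ 2 φ x) (hψ : DifferentiableAt ℝ ψ (φ x))
    (hΓ' : ∀ k i j, Γ' k i j (φ x) = Γ' k j i (φ x)) (k i j : Fin n) :
    pullbackConn φ ψ Γ' k i j x = pullbackConn φ ψ Γ' k j i x := by
  have hsymm : IsSymmSndFDerivAt ℝ φ x := hφ.isSymmSndFDerivAt (by simp)
  have hcomm := christoffelMap_pullbackConn hφ hψ Γ' (Pi.single i 1) (Pi.single j 1)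
  rw [christoffelMap_comm hΓ', hsymm.eq, ← christoffelMap_pullbackConn hφ hψ] at hcomm
  simpa only [christoffelMap_single] using congrFun hcomm k

lemma contDiffOn_pullbackConn (hU : IsOpen U) (hU' : IsOpen U')
    (hφ : ContDiffOn ℝ (⊤ : ℕ∞) φ U) (hψ : ContDiffOn ℝ (⊤ : ℕ∞) ψ U') (hmaps : Set.MapsTo φ U U')
    (hΓ' : ∀ k i j, ContDiffOn ℝ (⊤ : ℕ∞) (Γ' k i j) U') (k i j : Fin n) :
    ContDiffOn ℝ (⊤ : ℕ∞) (pullbackConn φ ψ Γ' k i j) U := by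
  have hφc : ∀ c, ContDiffOn ℝ (⊤ : ℕ∞) (fun y => φ y c) U := contDiffOn_pi.1 hφ
  have hψc : ∀ c, ContDiffOn ℝ (⊤ : ℕ∞) (fun x => pd c (fun y => ψ y k) (φ x)) U := fun c =>
    (contDiffOn_pd (contDiffOn_pi.1 hψ k) hU' c).comp hφ hmaps
  refine ContDiffOn.add ?_ ?_
  · refine ContDiffOn.sum fun p _ => ContDiffOn.sum fun q _ => ContDiffOn.sum fun c _ => ?_
    exact (((contDiffOn_pd (hφc p) hU i).mul (contDiffOn_pd (hφc q) hU j)).mul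
      ((hΓ' c p q).comp hφ hmaps)).mul (hψc c)
  · exact ContDiffOn.sum fun c _ =>
      (contDiffOn_pd (contDiffOn_pd (hφc c) hU j) hU i).mul (hψc c)

lemma IsTorsionFreeConnOn.pullbackConn (hΓ' : IsTorsionFreeConnOn U' Γ') (hU : IsOpen U)
    (hU' : IsOpen U') (hφ : ContDiffOn ℝ (⊤ : ℕ∞) φ U) (hψ : ContDiffOn ℝ (⊤ : ℕ∞) ψ U')
    (hmaps : Set.MapsTo φ U U') : IsTorsionFreeConnOn U (pullbackConn φ ψ Γ') where
  contDiffOn := contDiffOn_pullbackConn hU hU' hφ hψ hmaps hΓ'.contDiffOn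
  symm x hx := pullbackConn_symm
    ((hφ.contDiffAt (hU.mem_nhds hx)).of_le (WithTop.coe_le_coe.2 le_top))
    ((hψ.contDiffAt (hU'.mem_nhds (hmaps hx))).differentiableAt (by simp))
    (hΓ'.symm (φ x) (hmaps hx))

/-- By the chain rule `(φ ∘ γ)'' = D²φ(γ̇, γ̇) + Dφ(γ̈)`, and `Dφ` inverts the factor `Dψ` in
`christoffelMap_pullbackConn`. -/
lemma IsGeodesicOn.comp_of_pullbackConn {I : Set ℝ} {γ : ℝ → Fin n → ℝ}
    (hγ : IsGeodesicOn U (pullbackConn φ ψ Γ') I γ) (hI : IsOpen I) (hU : IsOpen U)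
    (hU' : IsOpen U') (hφ : ContDiffOn ℝ 2 φ U) (hψ : DifferentiableOn ℝ ψ U')
    (hmaps : Set.MapsTo φ U U') (hinv : ∀ x ∈ U, ψ (φ x) = x) (hinv' : ∀ y ∈ U', φ (ψ y) = y) :
    IsGeodesicOn U' Γ' I (φ ∘ γ) := by
  have hφγ : ∀ t ∈ I, ContDiffAt ℝ 2 φ (γ t) := fun t ht =>
    hφ.contDiffAt (hU.mem_nhds (hγ.1 t ht))
  have hfst : ∀ t ∈ I, deriv (φ ∘ γ) t = fderiv ℝ φ (γ t) (deriv γ t) := fun t ht =>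
    fderiv_comp_deriv t ((hφγ t ht).differentiableAt (by simp))
      (hγ.hasDerivAt hI ht).differentiableAt
  refine (isGeodesicOn_iff hI).2
    ⟨fun t ht => hmaps (hγ.1 t ht), hφ.comp hγ.2.1 hγ.1, fun t ht => ?_⟩
  have hφγ_nhds : U' ∈ nhds (φ (γ t)) := hU'.mem_nhds (hmaps (hγ.1 t ht))
  have hψφγ : DifferentiableAt ℝ ψ (φ (γ t)) := hψ.differentiableAt hφγ_nhds
  have hfst' : deriv (φ ∘ γ) =ᶠ[nhds t] fun s => fderiv ℝ φ (γ s) (deriv γ s) :=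
    Filter.eventually_of_mem (hI.mem_nhds ht) hfst
  have hDφ : HasDerivAt (fun s => fderiv ℝ φ (γ s))
      (fderiv ℝ (fderiv ℝ φ) (γ t) (deriv γ t)) t :=
    (((hφγ t ht).fderiv_right (m := 1) (by norm_num)).differentiableAt
      (by simp)).hasFDerivAt.comp_hasDerivAt t (hγ.hasDerivAt hI ht)
  have hDφDψ := fderiv_apply_fderiv_of_rightInverse ((hφγ t ht).differentiableAt (by simp)) hψφγ
    (hinv _ (hγ.1 t ht)) (Filter.eventually_of_mem hφγ_nhds hinv')
  rw [hfst'.deriv_eq, (hDφ.clm_apply (hγ.hasDerivAt_deriv hI ht)).deriv, hfst t ht,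
    christoffelMap_pullbackConn (hφγ t ht) hψφγ, map_neg, hDφDψ, Function.comp_apply]
  abel

lemma TotallyGeodesic.pullbackConn {ω ω' : (Fin n → ℝ) → Fin n → ℝ}
    (hg' : TotallyGeodesic U' Γ' ω') (hU : IsOpen U) (hU' : IsOpen U') (hφ : ContDiffOn ℝ 2 φ U)
    (hψ : DifferentiableOn ℝ ψ U') (hmaps : Set.MapsTo φ U U') (hinv : ∀ x ∈ U, ψ (φ x) = x)
    (hinv' : ∀ y ∈ U', φ (ψ y) = y)
    (hker : ∀ x ∈ U, ∀ w, ω' (φ x) ⬝ᵥ fderiv ℝ φ x w = 0 ↔ ω x ⬝ᵥ w = 0) :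
    TotallyGeodesic U (pullbackConn φ ψ Γ') ω := by
  refine totallyGeodesic_iff.2 fun I hI hIconn h0 γ hγ hγ0 t ht => ?_
  have hderiv : ∀ s ∈ I, deriv (φ ∘ γ) s = fderiv ℝ φ (γ s) (deriv γ s) := fun s hs =>
    fderiv_comp_deriv s
      ((hφ.contDiffAt (hU.mem_nhds (hγ.1 s hs))).differentiableAt (by simp))
      (hγ.hasDerivAt hI hs).differentiableAt
  have hφγ := hγ.comp_of_pullbackConn hI hU hU' hφ hψ hmaps hinv hinv'
  rw [← hker _ (hγ.1 t ht), ← hderiv t ht]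
  refine totallyGeodesic_iff.1 hg' I hI hIconn h0 _ hφγ ?_ t ht
  rw [hderiv 0 h0]
  exact (hker _ (hγ.1 0 h0) _).2 hγ0

end Pullback

theorem statement13_general {n : ℕ} {ι : Type*} [Fintype ι] (hι : n + 2 ≤ Fintype.card ι)
    {U U' : Set (Fin n → ℝ)} (hU : IsOpen U) (hU' : IsOpen U')
    {ωs ωs' : ι → (Fin n → ℝ) → Fin n → ℝ} (hω : ∀ i, DifferentiableOn ℝ (ωs i) U)
    (hpos : ∀ x ∈ U, InGeneralPosition ℝ n fun i => ωs i x)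
    {Γ Γ' : Fin n → Fin n → Fin n → (Fin n → ℝ) → ℝ}
    (hΓ : IsTorsionFreeConnOn U Γ) (hΓ' : IsTorsionFreeConnOn U' Γ')
    (hg : ∀ i, TotallyGeodesic U Γ (ωs i)) (hg' : ∀ i, TotallyGeodesic U' Γ' (ωs' i))
    {φ ψ : (Fin n → ℝ) → Fin n → ℝ}
    (hφ : ContDiffOn ℝ (⊤ : ℕ∞) φ U) (hψ : ContDiffOn ℝ (⊤ : ℕ∞) ψ U')
    (hmaps : Set.MapsTo φ U U') (hinv : ∀ x ∈ U, ψ (φ x) = x) (hinv' : ∀ y ∈ U', φ (ψ y) = y)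
    (hker : ∀ i, ∀ x ∈ U, ∀ w, ωs' i (φ x) ⬝ᵥ fderiv ℝ φ x w = 0 ↔ ωs i x ⬝ᵥ w = 0) :
    ProjEquiv U Γ (pullbackConn φ ψ Γ') :=
  projEquiv_of_totallyGeodesic hι hU hΓ (hΓ'.pullbackConn hU hU' hφ hψ hmaps) hω hpos hg fun i =>
    (hg' i).pullbackConn hU hU' (hφ.of_le (WithTop.coe_le_coe.2 le_top))
      (hψ.differentiableOn (by simp)) hmaps hinv hinv' (hker i)

/-- Gronwall-type theorem: a diffeomorphism mapping one geodesic `d`-web of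
hypersurfaces (`d ≥ n+2`) onto another is projective with respect to the canonical
projective structures: the pullback connection `φ*Γ'` is projectively equivalent to `Γ`. -/
theorem statement13 {n d : ℕ} (hn : 2 ≤ n) (hd : n + 2 ≤ d)
    (U U' : Set (Fin n → ℝ)) (hU : IsOpen U) (hU' : IsOpen U')
    (hUconn : IsConnected U) (hU'conn : IsConnected U')
    (ωs : Fin d → (Fin n → ℝ) → Fin n → ℝ) (hweb : IsWeb U ωs)
    (ωs' : Fin d → (Fin n → ℝ) → Fin n → ℝ) (hweb' : IsWeb U' ωs')
    (Γ Γ' : Fin n → Fin n → Fin n → (Fin n → ℝ) → ℝ)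
    (hΓ : IsTorsionFreeConn U Γ) (hΓ' : IsTorsionFreeConn U' Γ')
    (hg : ∀ i, TotallyGeodesic U Γ (ωs i)) (hg' : ∀ i, TotallyGeodesic U' Γ' (ωs' i))
    (φ ψ : (Fin n → ℝ) → Fin n → ℝ)
    (hφ : ContDiffOn ℝ (⊤ : ℕ∞) φ U) (hψ : ContDiffOn ℝ (⊤ : ℕ∞) ψ U')
    (hmaps : Set.MapsTo φ U U') (hmaps' : Set.MapsTo ψ U' U)
    (hinv : ∀ x ∈ U, ψ (φ x) = x) (hinv' : ∀ y ∈ U', φ (ψ y) = y)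
    (hwebmap : ∀ i, ∃ s : (Fin n → ℝ) → ℝ, ContDiffOn ℝ (⊤ : ℕ∞) s U ∧
      (∀ x ∈ U, s x ≠ 0) ∧
      ∀ x ∈ U, ∀ m, (∑ c, ωs' i (φ x) c * pd m (fun y => φ y c) x) = s x * ωs i x m) :
    ProjEquiv U Γ (pullbackConn φ ψ Γ') := by
  refine statement13_general (by simpa using hd) hU hU'
    (fun i => (hweb.1 i).1.differentiableOn (by simp)) hweb.2 hΓ.isTorsionFreeConnOn
    hΓ'.isTorsionFreeConnOn hg hg' hφ hψ hmaps hinv hinv' fun i x hx => ?_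
  obtain ⟨s, -, hs0, hs⟩ := hwebmap i
  exact dotProduct_fderiv_eq_zero_iff
    ((hφ.contDiffAt (hU.mem_nhds hx)).differentiableAt (by simp)) (hs0 x hx) (hs x hx)
end

section
/- Let Γ be a torsion-free affine connection on a connected and simply connected open set U ⊆ ℝⁿ (n ≥ 2). Then the real vector space { f ∈ C^∞(U) : d^s_Γ(df) = 0 } of affine functions of Γ has dimension n + 1 (the maximal possible value) if and only if Γ is flat, i.e. its curvature Rᵏₗᵢⱼ = ∂ᵢΓᵏⱼₗ − ∂ⱼΓᵏᵢₗ + Σₘ(Γᵏᵢₘ Γᵐⱼₗ − Γᵏⱼₘ Γᵐᵢₗ) vanishes identically on U. -/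
open scoped BigOperators

/-!
The `1`-jets of the affine functions of `Γ` are the parallel sections of a connection `d - A` on
the trivial bundle of rank `n + 1` over `U`, and the curvature of `d - A` is essentially that of
`Γ`. A parallel section is determined by its value at one point, so the space of affine functions
has dimension at most `n + 1`, with equality iff every vector is the value of a parallel section.
The curvature annihilates the values of parallel sections, whence it vanishes in case of equality.
Conversely, if the curvature vanishes, transporting a vector along the rays through a point
produces a parallel section on a ball: by Grönwall's inequality the derivative of the transport
with respect to the end point is the one prescribed by `A`. The transition functions between the
resulting local frames are locally constant, so parallel sections correspond to sections of a
covering space, and these exist globally over a simply connected base.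
-/

section LocalExistence

open Set Filter Topology

set_option maxSynthPendingDepth 3

variable {E V W : Type*} [NormedAddCommGroup E] [NormedSpace ℝ E] [NormedAddCommGroup V]
  [NormedSpace ℝ V] [NormedAddCommGroup W] [NormedSpace ℝ W]

theorem eventually_forall_norm_sub_sub_fderiv_le {K : Set E} (hK : IsCompact K) {f : E → W}
    (hf : ∀ x ∈ K, ContDiffAt ℝ 1 f x) {ε : ℝ} (hε : 0 < ε) :
    ∀ᶠ h in 𝓝 0, ∀ x ∈ K, ‖f (x + h) - f x - fderiv ℝ f x h‖ ≤ ε * ‖h‖ := by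
  refine hK.eventually_forall_of_forall_eventually fun x hx => ?_
  have hpair : Tendsto (fun z : E × E => (z.2 + z.1, z.2)) (𝓝 (0, x)) (𝓝 (x, x)) := by
    have : Continuous fun z : E × E => (z.2 + z.1, z.2) := by fun_prop
    simpa only [add_zero] using this.tendsto (0, x)
  have hstrict := hpair.eventually
    (((hf x hx).hasStrictFDerivAt one_ne_zero).isLittleO.bound (half_pos hε))
  have hcont : ∀ᶠ z : E × E in 𝓝 (0, x), ‖fderiv ℝ f x - fderiv ℝ f z.2‖ < ε / 2 := by
    have h := ((hf x hx).continuousAt_fderiv one_ne_zero).comp_of_eq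
      (continuousAt_snd (p := ((0 : E), x))) rfl
    simpa only [dist_comm, ← dist_eq_norm, Function.comp_apply] using
      Metric.continuousAt_iff'.1 h _ (half_pos hε)
  filter_upwards [hstrict, hcont] with z hz hz'
  rw [add_sub_cancel_left] at hz
  calc ‖f (z.2 + z.1) - f z.2 - fderiv ℝ f z.2 z.1‖
      = ‖(f (z.2 + z.1) - f z.2 - fderiv ℝ f x z.1) +
          (fderiv ℝ f x - fderiv ℝ f z.2) z.1‖ := by
        rw [sub_apply, sub_add_sub_cancel]
    _ ≤ ε / 2 * ‖z.1‖ + ε / 2 * ‖z.1‖ :=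
        norm_add_le_of_le hz (ContinuousLinearMap.le_of_opNorm_le _ hz'.le _)
    _ = ε * ‖z.1‖ := by ring

theorem eventually_forall_norm_sub_sub_fderiv_comp_le {T : Type*} [TopologicalSpace T] {I : Set T}
    (hI : IsCompact I) {f : V → W} {q : T → V} {L : T → E →L[ℝ] V} (hq : ContinuousOn q I)
    (hL : ContinuousOn L I) (hf : ∀ t ∈ I, ContDiffAt ℝ 1 f (q t)) {ε : ℝ} (hε : 0 < ε) :
    ∀ᶠ h in 𝓝 0, ∀ t ∈ I,
      ‖f (q t + L t h) - f (q t) - fderiv ℝ f (q t) (L t h)‖ ≤ ε * ‖h‖ := by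
  obtain ⟨C, hC⟩ := hI.exists_bound_of_continuousOn hL
  have hC' : ∀ t ∈ I, ‖L t‖ ≤ |C| + 1 := fun t ht => by
    linarith [hC t ht, le_abs_self C]
  have hCpos : 0 < |C| + 1 := by positivity
  obtain ⟨δ, hδ, hball⟩ := Metric.eventually_nhds_iff.1
    (eventually_forall_norm_sub_sub_fderiv_le (hI.image_of_continuousOn hq)
      (forall_mem_image.2 hf) (div_pos hε hCpos))
  filter_upwards [Metric.ball_mem_nhds 0 (div_pos hδ hCpos)] with h hh t ht
  rw [mem_ball_zero_iff, lt_div_iff₀ hCpos, mul_comm] at hh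
  have hLh : ‖L t h‖ ≤ (|C| + 1) * ‖h‖ := (L t).le_of_opNorm_le (hC' t ht) h
  calc ‖f (q t + L t h) - f (q t) - fderiv ℝ f (q t) (L t h)‖
      ≤ ε / (|C| + 1) * ‖L t h‖ :=
        hball (by simpa only [dist_zero_right] using hLh.trans_lt hh) _ (mem_image_of_mem q ht)
    _ ≤ ε / (|C| + 1) * ((|C| + 1) * ‖h‖) := by gcongr
    _ = ε * ‖h‖ := by field_simp

theorem exists_gronwallBound_zero_le (K x : ℝ) :
    ∃ C > 0, ∀ ε ≥ 0, gronwallBound 0 K ε x ≤ ε * C := by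
  have hlin : ∀ ε, gronwallBound 0 K ε x = ε * gronwallBound 0 K 1 x := fun ε => by
    rcases eq_or_ne K 0 with rfl | hK
    · simp [gronwallBound_K0]
    · simp [gronwallBound_of_K_ne_0 hK]
      ring
  refine ⟨|gronwallBound 0 K 1 x| + 1, by positivity, fun ε hε => ?_⟩
  rw [hlin]
  gcongr
  linarith [le_abs_self (gronwallBound 0 K 1 x)]

theorem hasDerivWithinAt_Ici_of_Icc {f : ℝ → V} {f' : V} {a b t : ℝ} (ht : t ∈ Ico a b)
    (hf : HasDerivWithinAt f f' (Icc a b) t) : HasDerivWithinAt f f' (Ici t) t :=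
  hf.mono_of_mem_nhdsWithin (Icc_mem_nhdsGE_of_mem ht)

/-- The curvature of the connection `d - A` on the trivial bundle with fibre `V`, as a bilinear
form with values in the endomorphisms of `V`. -/
noncomputable def curvatureForm (A : E → E →L[ℝ] V →L[ℝ] V) (x : E) :
    E →L[ℝ] E →L[ℝ] V →L[ℝ] V :=
  let S := fderiv ℝ A x +
    (ContinuousLinearMap.compL ℝ V V V).flip.bilinearComp (A x) (A x)
  S - S.flip

theorem curvatureForm_apply (A : E → E →L[ℝ] V →L[ℝ] V) (x u w : E) (v : V) :
    curvatureForm A x u w v =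
      (fderiv ℝ A x u w v + A x w (A x u v)) - (fderiv ℝ A x w u v + A x u (A x w v)) :=
  rfl

/-- The right-hand side of the equation of parallel transport for the connection `d - A`, as a
function of the position, the velocity and the transported vector. -/
noncomputable def transportField (A : E → E →L[ℝ] V →L[ℝ] V) (q : E × E × V) : V :=
  A q.1 q.2.1 q.2.2

/-- `φ` solves on `[0, 1]` the equation of parallel transport for the connection `d - A` along
the segment from `p` to `p + η`. -/
def IsParallelAlong (A : E → E →L[ℝ] V →L[ℝ] V) (p η : E) (φ : ℝ → V) : Prop :=
  ∀ t ∈ Icc (0 : ℝ) 1, HasDerivWithinAt φ (transportField A (p + t • η, η, φ t)) (Icc 0 1) t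

/-- The infinitesimal variation of `(p + t • η, η, φ t)`, a point of a parallel transport, when
the end point `p + η` of the segment moves. -/
noncomputable def transportVariation (A : E → E →L[ℝ] V →L[ℝ] V) (p η : E) (φ : ℝ → V) (t : ℝ) :
    E →L[ℝ] E × E × V :=
  (t • ContinuousLinearMap.id ℝ E).prod
    ((ContinuousLinearMap.id ℝ E).prod (t • (A (p + t • η)).flip (φ t)))

variable {A : E → E →L[ℝ] V →L[ℝ] V} {p η : E} {φ : ℝ → V}

theorem contDiffAt_transportField {q : E × E × V} (hA : ContDiffAt ℝ 1 A q.1) :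
    ContDiffAt ℝ 1 (transportField A) q :=
  ((hA.comp q contDiffAt_fst).clm_apply (contDiffAt_fst.comp q contDiffAt_snd)).clm_apply
    (contDiffAt_snd.comp q contDiffAt_snd)

theorem fderiv_transportField_apply {q : E × E × V} (hA : DifferentiableAt ℝ A q.1)
    (k : E × E × V) :
    fderiv ℝ (transportField A) q k =
      fderiv ℝ A q.1 k.1 q.2.1 q.2.2 + A q.1 k.2.1 q.2.2 + A q.1 q.2.1 k.2.2 := by
  have hAfst : HasFDerivAt (fun q : E × E × V => A q.1) _ q :=
    hA.hasFDerivAt.comp q hasFDerivAt_fst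
  have h : HasFDerivAt (transportField A) _ q :=
    (hAfst.clm_apply hasFDerivAt_snd.fst).clm_apply hasFDerivAt_snd.snd
  rw [h.fderiv]
  simp [add_comm]

theorem IsParallelAlong.continuousOn (hφ : IsParallelAlong A p η φ) :
    ContinuousOn φ (Icc 0 1) :=
  fun t ht => (hφ t ht).continuousWithinAt

theorem IsParallelAlong.apply_one_eq_apply_zero (hφ : IsParallelAlong A p 0 φ) : φ 1 = φ 0 :=
  constant_of_has_deriv_right_zero hφ.continuousOn
    (fun t ht => by
      simpa [transportField] using
        hasDerivWithinAt_Ici_of_Icc ht (hφ t (Ico_subset_Icc_self ht))) 1 (by simp)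

theorem hasDerivAt_segment (p η : E) (t : ℝ) :
    HasDerivAt (fun t : ℝ => p + t • η) η t := by
  simpa using ((hasDerivAt_id t).smul_const η).const_add p

/-- Flatness is what turns the derivative of the variation field `t • A h φ` into the linearised
transport equation. -/
theorem IsParallelAlong.hasDerivWithinAt_add_variation (hφ : IsParallelAlong A p η φ)
    {t : ℝ} (ht : t ∈ Icc (0 : ℝ) 1) (hA : DifferentiableAt ℝ A (p + t • η))
    (hflat : curvatureForm A (p + t • η) = 0) (h : E) :
    HasDerivWithinAt (fun t => φ t + t • A (p + t • η) h (φ t))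
      (transportField A (p + t • η, η, φ t) +
        fderiv ℝ (transportField A) (p + t • η, η, φ t) (transportVariation A p η φ t h))
      (Icc 0 1) t := by
  have hAseg : HasDerivWithinAt (fun t : ℝ => A (p + t • η)) (fderiv ℝ A (p + t • η) η)
      (Icc 0 1) t :=
    (hA.hasFDerivAt.comp_hasDerivAt t (hasDerivAt_segment p η t)).hasDerivWithinAt
  have hAφ := (hAseg.clm_apply (hasDerivWithinAt_const t (Icc 0 1) h)).clm_apply (hφ t ht)
  refine ((hφ t ht).add ((hasDerivWithinAt_id t (Icc 0 1)).smul hAφ)).congr_deriv ?_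
  have hcurv := curvatureForm_apply A (p + t • η) η h (φ t)
  rw [hflat, eq_comm] at hcurv
  replace hcurv := sub_eq_zero.1 hcurv
  rw [fderiv_transportField_apply hA]
  simp only [transportField, transportVariation, ContinuousLinearMap.prod_apply, smul_apply,
    ContinuousLinearMap.flip_apply, ContinuousLinearMap.id_apply, map_smul, map_zero, add_zero,
    one_smul, id]
  rw [hcurv, smul_add]
  abel

theorem IsParallelAlong.eventually_norm_defect_le (hφ : IsParallelAlong A p η φ)
    (hA : ∀ t ∈ Icc (0 : ℝ) 1, ContDiffAt ℝ 1 A (p + t • η)) {ε : ℝ} (hε : 0 < ε) :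
    ∀ᶠ h in 𝓝 0, ∀ t ∈ Icc (0 : ℝ) 1,
      ‖transportField A (p + t • (η + h), η + h, φ t + t • A (p + t • η) h (φ t)) -
        transportField A (p + t • η, η, φ t) -
        fderiv ℝ (transportField A) (p + t • η, η, φ t) (transportVariation A p η φ t h)‖ ≤
      ε * ‖h‖ := by
  have hAseg : ContinuousOn (fun t : ℝ => A (p + t • η)) (Icc 0 1) := fun t ht =>
    ((hA t ht).continuousAt.comp_of_eq (hasDerivAt_segment p η t).continuousAt
      rfl).continuousWithinAt
  have hflip : ContinuousOn (fun t : ℝ => (A (p + t • η)).flip) (Icc 0 1) :=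
    (ContinuousLinearMap.flipₗᵢ ℝ E V V).continuous.comp_continuousOn hAseg
  have hq : ContinuousOn (fun t : ℝ => (p + t • η, η, φ t)) (Icc 0 1) := by
    have := hφ.continuousOn
    fun_prop
  have hL : ContinuousOn (transportVariation A p η φ) (Icc 0 1) := by
    have hvert : ContinuousOn (fun t : ℝ => (ContinuousLinearMap.id ℝ E).prod
        (t • (A (p + t • η)).flip (φ t))) (Icc 0 1) :=
      (ContinuousLinearMap.prodₗᵢ ℝ).continuous.comp_continuousOn
        (continuousOn_const.prodMk (continuousOn_id.smul (hflip.clm_apply hφ.continuousOn)))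
    exact (ContinuousLinearMap.prodₗᵢ ℝ).continuous.comp_continuousOn
      ((continuousOn_id.smul continuousOn_const).prodMk hvert)
  filter_upwards [eventually_forall_norm_sub_sub_fderiv_comp_le isCompact_Icc hq hL
    (fun t ht => contDiffAt_transportField (hA t ht)) hε] with h hh t ht
  have := hh t ht
  simpa [transportVariation, smul_add, add_assoc] using this

theorem IsParallelAlong.hasFDerivAt_apply_one {Φ : E → ℝ → V} {K : NNReal}
    (hΦ : ∀ᶠ η' in 𝓝 η, IsParallelAlong A p η' (Φ η') ∧ Φ η' 0 = Φ η 0)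
    (hK : ∀ᶠ η' in 𝓝 η, ∀ t ∈ Icc (0 : ℝ) 1, ‖A (p + t • η') η'‖₊ ≤ K)
    (hA : ∀ t ∈ Icc (0 : ℝ) 1, ContDiffAt ℝ 1 A (p + t • η))
    (hflat : ∀ t ∈ Icc (0 : ℝ) 1, curvatureForm A (p + t • η) = 0) :
    HasFDerivAt (fun η' => Φ η' 1) ((A (p + η)).flip (Φ η 1)) η := by
  have hφ := hΦ.self_of_nhds.1
  have hadd : Tendsto (fun h => η + h) (𝓝 0) (𝓝 η) := by
    simpa using (continuous_const_add η).tendsto 0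
  have hvar := fun h t (ht : t ∈ Icc (0 : ℝ) 1) =>
    hφ.hasDerivWithinAt_add_variation ht ((hA t ht).differentiableAt one_ne_zero) (hflat t ht) h
  obtain ⟨C, hC, hgronwall⟩ := exists_gronwallBound_zero_le K 1
  rw [hasFDerivAt_iff_isLittleO_nhds_zero, Asymptotics.isLittleO_iff]
  intro ε hε
  filter_upwards [hadd.eventually hΦ, hadd.eventually hK,
    hφ.eventually_norm_defect_le hA (div_pos hε hC)] with h hh hKh hdefect
  have hdist := dist_le_of_approx_trajectories_ODE_of_mem
    (v := fun t w => transportField A (p + t • (η + h), η + h, w)) (s := fun _ => univ)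
    (fun t ht => ((A (p + t • (η + h)) (η + h)).lipschitz.weaken
      (hKh t (Ico_subset_Icc_self ht))).lipschitzOnWith)
    hh.1.continuousOn
    (fun t ht => hasDerivWithinAt_Ici_of_Icc ht (hh.1 t (Ico_subset_Icc_self ht)))
    (fun t _ => (dist_self _).le) (fun _ _ => mem_univ _)
    (fun t ht => (hvar h t ht).continuousWithinAt)
    (fun t ht => hasDerivWithinAt_Ici_of_Icc ht (hvar h t (Ico_subset_Icc_self ht)))
    (fun t ht => by
      rw [dist_comm, dist_eq_norm, ← sub_sub]
      exact hdefect t (Ico_subset_Icc_self ht))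
    (fun _ _ => mem_univ _) (δ := 0) (by simp [hh.2]) 1 (by simp)
  simp only [zero_add, sub_zero, one_smul, dist_eq_norm, ← sub_sub] at hdist
  calc ‖Φ (η + h) 1 - Φ η 1 - A (p + η) h (Φ η 1)‖
      ≤ gronwallBound 0 K (ε / C * ‖h‖) 1 := hdist
    _ ≤ ε / C * ‖h‖ * C := hgronwall _ (by positivity)
    _ = ε * ‖h‖ := by field_simp

theorem exists_hasDerivWithinAt_linear [CompleteSpace V] {L : ℝ → V →L[ℝ] V}
    (hL : ContinuousOn L (Icc 0 1)) (hbound : ∀ t ∈ Icc (0 : ℝ) 1, ‖L t‖₊ ≤ 1 / 2) (v : V) :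
    ∃ φ : ℝ → V, φ 0 = v ∧
      ∀ t ∈ Icc (0 : ℝ) 1, HasDerivWithinAt φ (L t (φ t)) (Icc 0 1) t := by
  have hPL : IsPicardLindelof (fun t x => L t x) (⟨0, by simp⟩ : Icc (0 : ℝ) 1) v ‖v‖₊ 0 ‖v‖₊ 1 :=
    { lipschitzOnWith := fun t ht => ((L t).lipschitz.weaken
        ((hbound t ht).trans (half_le_self zero_le_one))).lipschitzOnWith
      continuousOn := fun x _ => hL.clm_apply continuousOn_const
      norm_le := fun t ht x hx => by
        have hx' : ‖x‖ ≤ 2 * ‖v‖ := by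
          have h := norm_le_norm_add_norm_sub' x v
          rw [mem_closedBall_iff_norm, coe_nnnorm] at hx
          linarith
        have hLt : ‖L t‖ ≤ 1 / 2 := hbound t ht
        calc ‖L t x‖ ≤ 1 / 2 * (2 * ‖v‖) := (L t).le_of_opNorm_le_of_le hLt hx'
          _ = ‖v‖₊ := by rw [coe_nnnorm]; ring
      mul_max_le := by simp }
  exact hPL.exists_eq_forall_mem_Icc_hasDerivWithinAt₀

/-- `F` is a parallel section over `s` of the trivial bundle with fibre `V` and connection
`d - A`. -/
def IsParallelOn (A : E → E →L[ℝ] V →L[ℝ] V) (F : E → V) (s : Set E) : Prop :=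
  ∀ x ∈ s, HasFDerivAt F ((A x).flip (F x)) x

theorem exists_isParallelOn_of_starConvex [CompleteSpace V] {s : Set E} (hso : IsOpen s)
    (hps : p ∈ s) (hs : StarConvex ℝ p s) (hA : ∀ x ∈ s, ContDiffAt ℝ 1 A x)
    (hflat : ∀ x ∈ s, curvatureForm A x = 0)
    (hsmall : ∀ η, p + η ∈ s → ∀ t ∈ Icc (0 : ℝ) 1, ‖A (p + t • η) η‖₊ ≤ 1 / 2) (v : V) :
    ∃ F : E → V, F p = v ∧ IsParallelOn A F s := by
  have hseg : ∀ η, p + η ∈ s → ∀ t ∈ Icc (0 : ℝ) 1, p + t • η ∈ s := fun η hη t ht =>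
    hs.add_smul_mem hη ht.1 ht.2
  have htransport : ∀ η, ∃ φ : ℝ → V, p + η ∈ s → IsParallelAlong A p η φ ∧ φ 0 = v := by
    intro η
    by_cases hη : p + η ∈ s
    · obtain ⟨φ, hφ0, hφ⟩ := exists_hasDerivWithinAt_linear
        (L := fun t => A (p + t • η) η) (v := v)
        (fun t ht => (((hA _ (hseg η hη t ht)).continuousAt.comp_of_eq
          (hasDerivAt_segment p η t).continuousAt rfl).clm_apply
            continuousAt_const).continuousWithinAt)
        (hsmall η hη)
      exact ⟨φ, fun _ => ⟨hφ, hφ0⟩⟩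
    · exact ⟨0, fun h => absurd h hη⟩
  choose Φ hΦ using htransport
  refine ⟨fun y => Φ (y - p) 1, ?_, fun y hy => ?_⟩
  · obtain ⟨hpar, h0⟩ := hΦ 0 (by simpa using hps)
    simpa [hpar.apply_one_eq_apply_zero] using h0
  obtain ⟨η, rfl⟩ : ∃ η, y = p + η := ⟨y - p, (add_sub_cancel p y).symm⟩
  have hev : ∀ᶠ η' in 𝓝 η, p + η' ∈ s :=
    (continuous_const_add p).continuousAt.eventually_mem (hso.mem_nhds hy)
  have hder : HasFDerivAt (fun η' => Φ η' 1) ((A (p + η)).flip (Φ η 1)) η :=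
    IsParallelAlong.hasFDerivAt_apply_one
      (hev.mono fun η' hη' => ⟨(hΦ η' hη').1, (hΦ η' hη').2.trans (hΦ η hy).2.symm⟩)
      (hev.mono hsmall) (fun t ht => hA _ (hseg η hy t ht)) (fun t ht => hflat _ (hseg η hy t ht))
  exact (hasFDerivAt_comp_sub (f := fun η' => Φ η' 1) p).2 (by simpa using hder)

end LocalExistence

section ParallelSections

open Set Filter Topology

set_option maxSynthPendingDepth 3

variable {E V : Type*} [NormedAddCommGroup E] [NormedSpace ℝ E] [NormedAddCommGroup V]
  [NormedSpace ℝ V] {A : E → E →L[ℝ] V →L[ℝ] V} {F G : E → V} {s t U : Set E}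

namespace IsParallelOn

theorem mono (hF : IsParallelOn A F s) (hts : t ⊆ s) : IsParallelOn A F t :=
  fun x hx => hF x (hts hx)

theorem congr (hF : IsParallelOn A F s) (hs : IsOpen s) (hFG : EqOn G F s) :
    IsParallelOn A G s := fun x hx => by
  rw [hFG hx]
  exact (hF x hx).congr_of_eventuallyEq (eventually_of_mem (hs.mem_nhds hx) hFG)

theorem add (hF : IsParallelOn A F s) (hG : IsParallelOn A G s) :
    IsParallelOn A (F + G) s := fun x hx => by
  simpa only [Pi.add_apply, map_add] using (hF x hx).add (hG x hx)

theorem const_smul (hF : IsParallelOn A F s) (c : ℝ) : IsParallelOn A (c • F) s := fun x hx => by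
  simpa only [Pi.smul_apply, map_smul] using (hF x hx).const_smul c

theorem isParallelAlong (hF : IsParallelOn A F s) {p η : E}
    (hs : ∀ t ∈ Icc (0 : ℝ) 1, p + t • η ∈ s) : IsParallelAlong A p η (fun t => F (p + t • η)) :=
  fun t ht => ((hF _ (hs t ht)).comp_hasDerivAt (f := fun t : ℝ => p + t • η) t
    (hasDerivAt_segment p η t)).hasDerivWithinAt

end IsParallelOn

theorem IsParallelAlong.eqOn {p η : E} {φ ψ : ℝ → V} (hφ : IsParallelAlong A p η φ)
    (hψ : IsParallelAlong A p η ψ) (hA : ContinuousOn (fun t : ℝ => A (p + t • η)) (Icc 0 1))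
    (h0 : φ 0 = ψ 0) : EqOn φ ψ (Icc 0 1) := by
  obtain ⟨K, hK⟩ := isCompact_Icc.exists_bound_of_continuousOn
    (hA.clm_apply (continuousOn_const (c := η)))
  refine ODE_solution_unique_of_mem_Icc_right (s := fun _ => univ) (K := K.toNNReal)
    (v := fun t w => transportField A (p + t • η, η, w)) (fun t ht => ?_) hφ.continuousOn
    (fun t ht => hasDerivWithinAt_Ici_of_Icc ht (hφ t (Ico_subset_Icc_self ht)))
    (fun _ _ => mem_univ _) hψ.continuousOn
    (fun t ht => hasDerivWithinAt_Ici_of_Icc ht (hψ t (Ico_subset_Icc_self ht)))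
    (fun _ _ => mem_univ _) h0
  refine ((A (p + t • η) η).lipschitz.weaken ?_).lipschitzOnWith
  exact NNReal.le_toNNReal_of_coe_le (hK t (Ico_subset_Icc_self ht))

theorem IsParallelOn.eqOn_of_convex (hF : IsParallelOn A F s) (hG : IsParallelOn A G s)
    (hs : Convex ℝ s) (hA : ContinuousOn A s) {p : E} (hp : p ∈ s) (h : F p = G p) :
    EqOn F G s := by
  intro q hq
  have hseg : ∀ t ∈ Icc (0 : ℝ) 1, p + t • (q - p) ∈ s := fun t ht =>
    hs.add_smul_sub_mem hp hq ht
  have hAseg : ContinuousOn (fun t : ℝ => A (p + t • (q - p))) (Icc 0 1) :=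
    hA.comp (by fun_prop) hseg
  simpa using (hF.isParallelAlong hseg).eqOn (hG.isParallelAlong hseg) hAseg (by simpa using h)
    (right_mem_Icc.2 zero_le_one)

theorem IsParallelOn.eqOn_of_isPreconnected (hF : IsParallelOn A F U) (hG : IsParallelOn A G U)
    (hU : IsOpen U) (hUc : IsPreconnected U) (hA : ContinuousOn A U) {p : E} (hp : p ∈ U)
    (h : F p = G p) : EqOn F G U := by
  intro q hq
  refine (hUc.induction₂ (fun x y => F x = G x ↔ F y = G y) (fun x hx => ?_)
    (fun _ _ _ _ _ _ => Iff.trans) (fun _ _ _ _ => Iff.symm) hp hq).1 h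
  obtain ⟨r, hr, hball⟩ := Metric.isOpen_iff.1 hU x hx
  filter_upwards [mem_nhdsWithin_of_mem_nhds (Metric.ball_mem_nhds x hr)] with y hy
  have hiff : ∀ {a b}, a ∈ Metric.ball x r → b ∈ Metric.ball x r → F a = G a → F b = G b :=
    fun ha hb hab => (hF.mono hball).eqOn_of_convex (hG.mono hball) (convex_ball x r)
      (hA.mono hball) ha hab hb
  exact ⟨hiff (Metric.mem_ball_self hr) hy, hiff hy (Metric.mem_ball_self hr)⟩

theorem exists_ball_forall_exists_isParallelOn [CompleteSpace V] (hU : IsOpen U)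
    (hA : ContDiffOn ℝ 1 A U) (hflat : ∀ x ∈ U, curvatureForm A x = 0) {x : E} (hx : x ∈ U) :
    ∃ r > 0, Metric.ball x r ⊆ U ∧ ∀ p ∈ Metric.ball x r, ∀ v : V,
      ∃ F : E → V, F p = v ∧ IsParallelOn A F (Metric.ball x r) := by
  have hAx : ContinuousAt A x := hA.continuousOn.continuousAt (hU.mem_nhds hx)
  set M := ‖A x‖₊ + 1
  have hMpos : 0 < M := by positivity
  obtain ⟨ε, hε, hball⟩ := Metric.eventually_nhds_iff_ball.1
    ((hAx.nnnorm.eventually_le_const (lt_add_one _)).and (hU.eventually_mem hx))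
  set r := min ε (1 / (4 * M))
  have hsub : Metric.ball x r ⊆ Metric.ball x ε := Metric.ball_subset_ball (min_le_left _ _)
  refine ⟨r, by positivity, fun y hy => (hball y (hsub hy)).2, fun p hp v => ?_⟩
  have hstar := (convex_ball x r).starConvex hp
  refine exists_isParallelOn_of_starConvex Metric.isOpen_ball hp hstar
    (fun y hy => hA.contDiffAt (hU.mem_nhds (hball y (hsub hy)).2))
    (fun y hy => hflat y (hball y (hsub hy)).2) (fun η hη t ht => ?_) v
  have hηr : ‖η‖ ≤ 2 * (1 / (4 * M)) := by
    have h := dist_triangle_right (p + η) p x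
    rw [dist_self_add_left] at h
    linarith [Metric.mem_ball.1 hp, Metric.mem_ball.1 hη, min_le_right ε (1 / (4 * (M : ℝ)))]
  have hAη := (hball _ (hsub (hstar.add_smul_mem hη ht.1 ht.2))).1
  calc ‖A (p + t • η) η‖ ≤ M * (2 * (1 / (4 * M))) :=
        ContinuousLinearMap.le_of_opNorm_le_of_le _ hAη hηr
    _ = 1 / 2 := by field_simp; norm_num

theorem exists_parallelFrame (hs : IsOpen s) (hsc : Convex ℝ s) (hA : ContinuousOn A s) {p : E}
    (hp : p ∈ s)
    (hex : ∀ q ∈ s, ∀ v : V, ∃ F : E → V, F q = v ∧ IsParallelOn A F s) :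
    ∃ P : E → V ≃ V, ∀ v, IsParallelOn A (fun y => P y v) s := by
  choose F hFp hF using hex p hp
  have hbij : ∀ y ∈ s, Function.Bijective fun v => F v y := fun y hy => by
    refine ⟨fun v w hvw => ?_, fun w => ?_⟩
    · rw [← hFp v, ← hFp w]
      exact (hF v).eqOn_of_convex (hF w) hsc hA hy hvw hp
    · obtain ⟨G, hGy, hG⟩ := hex y hy w
      exact ⟨G p, ((hF (G p)).eqOn_of_convex hG hsc hA hp (hFp _) hy).trans hGy⟩
  have hequiv : ∀ y, ∃ e : V ≃ V, y ∈ s → ∀ v, e v = F v y := fun y => by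
    by_cases hy : y ∈ s
    · exact ⟨Equiv.ofBijective _ (hbij y hy), fun _ _ => rfl⟩
    · exact ⟨Equiv.refl V, fun h => absurd h hy⟩
  choose P hP using hequiv
  exact ⟨P, fun v => (hF v).congr hs fun y hy => hP y hy v⟩

end ParallelSections

section Monodromy

open Set Filter Topology

variable {ι X V : Type*} [TopologicalSpace X] [SimplyConnectedSpace X]
  [LocallyPathConnectedSpace X]

theorem exists_section_of_discreteFiber [TopologicalSpace V] [DiscreteTopology V]
    (Z : FiberBundleCore ι X V) (x₀ : X) (v₀ : V) :
    ∃ f : X → V, f x₀ = v₀ ∧ ∀ i, ∀ x ∈ Z.baseSet i, ∀ᶠ y in 𝓝 x,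
      Z.coordChange (Z.indexAt y) i y (f y) = Z.coordChange (Z.indexAt x) i x (f x) := by
  obtain ⟨s, ⟨hs₀, hs⟩, -⟩ :=
    (FiberBundle.isCoveringMap (F := V) (E := Z.Fiber)).existsUnique_continuousMap_lifts
      (ContinuousMap.id X) x₀ (⟨x₀, v₀⟩ : Bundle.TotalSpace V Z.Fiber) rfl
  have hproj : ∀ x, (s x).proj = x := congrFun hs
  obtain ⟨f, hf⟩ : ∃ f : X → V, ∀ x, s x = ⟨x, f x⟩ :=
    ⟨fun x => (s x).snd, fun x => Bundle.TotalSpace.ext (hproj x) HEq.rfl⟩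
  refine ⟨f, Bundle.TotalSpace.mk_injective x₀ ((hf x₀).symm.trans hs₀), fun i x hx => ?_⟩
  have hcont : ContinuousAt (fun y => (Z.localTriv i (s y)).2) x := by
    refine continuousAt_snd.comp (ContinuousAt.comp ?_ s.continuous.continuousAt)
    apply (Z.localTriv i).continuousAt
    rwa [Z.mem_localTriv_source, hproj]
  have hev : ∀ᶠ y in 𝓝 x, (Z.localTriv i (s y)).2 = (Z.localTriv i (s x)).2 := by
    simpa only [nhds_discrete, tendsto_pure] using hcont.tendsto
  simpa only [hf, Z.localTriv_apply] using hev

theorem exists_section_of_locally_constant_transition {B : ι → Set X} (hB : ∀ i, IsOpen (B i))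
    (hcover : ∀ x, ∃ i, x ∈ B i) (P : ι → X → V ≃ V)
    (hP : ∀ i j, ∀ x ∈ B i ∩ B j, ∀ v, ∀ᶠ y in 𝓝 x,
      (P j y).symm (P i y v) = (P j x).symm (P i x v)) (x₀ : X) (v₀ : V) :
    ∃ F : X → V, F x₀ = v₀ ∧
      ∀ i, ∀ x ∈ B i, ∀ᶠ y in 𝓝 x, (P i y).symm (F y) = (P i x).symm (F x) := by
  let _ : TopologicalSpace V := ⊥
  have : DiscreteTopology V := ⟨rfl⟩
  choose index hindex using hcover
  let Z : FiberBundleCore ι X V :=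
    { baseSet := B
      isOpen_baseSet := hB
      indexAt := index
      mem_baseSet_at := hindex
      coordChange := fun i j x v => (P j x).symm (P i x v)
      coordChange_self := fun i x _ v => (P i x).symm_apply_apply v
      continuousOn_coordChange := by
        rintro i j ⟨x, v⟩ ⟨hx, -⟩
        have hlocal : ∀ᶠ q : X × V in 𝓝 (x, v),
            (P j q.1).symm (P i q.1 q.2) = (P j x).symm (P i x v) := by
          rw [nhds_prod_eq, nhds_discrete V, prod_pure, eventually_map]
          exact hP i j x hx v
        exact (continuousAt_const.congr (hlocal.mono fun _ h => h.symm)).continuousWithinAt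
      coordChange_comp := fun i j k x _ v => by simp only [Equiv.apply_symm_apply] }
  obtain ⟨f, hf₀, hf⟩ := exists_section_of_discreteFiber Z x₀ ((P (index x₀) x₀).symm v₀)
  exact ⟨fun x => P (index x) x (f x), by simp [hf₀], hf⟩

end Monodromy

section GlobalExistence

open Set Filter Topology

variable {E V : Type*} [NormedAddCommGroup E] [NormedSpace ℝ E] [NormedAddCommGroup V]
  [NormedSpace ℝ V] {A : E → E →L[ℝ] V →L[ℝ] V} {U : Set E}

theorem eventually_symm_apply_parallelFrame_eq {s t : Set E} (hs : IsOpen s) (ht : IsOpen t)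
    (hsc : Convex ℝ s) (htc : Convex ℝ t) (hA : ContinuousOn A s) {P Q : E → V ≃ V}
    (hP : ∀ v, IsParallelOn A (fun y => P y v) s) (hQ : ∀ v, IsParallelOn A (fun y => Q y v) t)
    {x : E} (hx : x ∈ s ∩ t) (v : V) :
    ∀ᶠ y in 𝓝 x, (Q y).symm (P y v) = (Q x).symm (P x v) := by
  filter_upwards [(hs.inter ht).mem_nhds hx] with y hy
  rw [Equiv.symm_apply_eq]
  exact ((hP v).mono inter_subset_left).eqOn_of_convex ((hQ _).mono inter_subset_right)
    (hsc.inter htc) (hA.mono inter_subset_left) hx ((Q x).apply_symm_apply _).symm hy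

theorem exists_isParallelOn_of_simplyConnected [CompleteSpace V] (hU : IsOpen U)
    [SimplyConnectedSpace U] (hA : ContDiffOn ℝ 1 A U)
    (hflat : ∀ x ∈ U, curvatureForm A x = 0) {x₀ : E} (hx₀ : x₀ ∈ U) (v₀ : V) :
    ∃ F : E → V, F x₀ = v₀ ∧ IsParallelOn A F U := by
  have : LocallyPathConnectedSpace U := hU.locallyPathConnectedSpace
  choose r hr hrU hex using fun i : U => exists_ball_forall_exists_isParallelOn hU hA hflat i.2
  have hAball : ∀ i : U, ContinuousOn A (Metric.ball (i : E) (r i)) := fun i =>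
    hA.continuousOn.mono (hrU i)
  choose P hP using fun i : U => exists_parallelFrame Metric.isOpen_ball (convex_ball _ _)
    (hAball i) (Metric.mem_ball_self (hr i)) (hex i)
  have heventually : ∀ {p : E → Prop} (x : U), (∀ᶠ y in 𝓝 (x : E), p y) ↔ ∀ᶠ y : U in 𝓝 x, p y :=
    fun x => by rw [← hU.isOpenEmbedding_subtypeVal.map_nhds_eq x, eventually_map]
  obtain ⟨f, hf₀, hf⟩ := exists_section_of_locally_constant_transition
    (B := fun i : U => Subtype.val ⁻¹' Metric.ball (i : E) (r i))
    (fun i => Metric.isOpen_ball.preimage continuous_subtype_val)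
    (fun x => ⟨x, Metric.mem_ball_self (hr x)⟩) (fun i x => P i x)
    (fun i j x hx v => (heventually x).1 (eventually_symm_apply_parallelFrame_eq
      Metric.isOpen_ball Metric.isOpen_ball (convex_ball _ _) (convex_ball _ _) (hAball i)
      (hP i) (hP j) hx v)) ⟨x₀, hx₀⟩ v₀
  have hextend : ∀ x : U, Function.extend Subtype.val f 0 x = f x :=
    Subtype.val_injective.extend_apply f 0
  refine ⟨Function.extend Subtype.val f 0, (hextend ⟨x₀, hx₀⟩).trans hf₀, fun x hx => ?_⟩
  lift x to U using hx
  have hlocal : Function.extend Subtype.val f 0 =ᶠ[𝓝 (x : E)]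
      fun y => P x y ((P x x).symm (f x)) := by
    refine (heventually x).2 ((hf x x (Metric.mem_ball_self (hr x))).mono fun y hy => ?_)
    rw [hextend, ← Equiv.symm_apply_eq, hy]
  rw [hlocal.eq_of_nhds]
  exact (hP x _ x (Metric.mem_ball_self (hr x))).congr_of_eventuallyEq hlocal

end GlobalExistence

section ParallelSectionSpace

open Set Filter

set_option maxSynthPendingDepth 3

variable {E V : Type*} [NormedAddCommGroup E] [NormedSpace ℝ E] [NormedAddCommGroup V]
  [NormedSpace ℝ V] {A : E → E →L[ℝ] V →L[ℝ] V} {F : E → V} {U : Set E}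

namespace IsParallelOn

theorem contDiffOn_add_one {r : ℕ∞} (hF : IsParallelOn A F U) (hU : IsOpen U)
    (hA : ContDiffOn ℝ r A U) (hFr : ContDiffOn ℝ r F U) : ContDiffOn ℝ (r + 1) F U := by
  rw [contDiffOn_succ_iff_fderiv_of_isOpen hU]
  refine ⟨fun x hx => (hF x hx).differentiableAt.differentiableWithinAt, by simp, ?_⟩
  have hflip : ContDiffOn ℝ r (fun x => (A x).flip) U :=
    (ContinuousLinearMap.flipₗᵢ ℝ E V V).contDiff.comp_contDiffOn hA
  exact (hflip.clm_apply hFr).congr fun x hx => (hF x hx).fderiv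

theorem contDiffOn {r : ℕ∞} (hF : IsParallelOn A F U) (hU : IsOpen U)
    (hA : ContDiffOn ℝ r A U) : ContDiffOn ℝ (r + 1) F U := by
  refine hF.contDiffOn_add_one hU hA (contDiffOn_iff_forall_nat_le.2 fun m hm => ?_)
  induction m with
  | zero => exact contDiffOn_zero.2 fun x hx => (hF x hx).continuousAt.continuousWithinAt
  | succ m ih =>
    have hmr : (m : ℕ∞) ≤ r := (Nat.cast_le.2 m.le_succ).trans hm
    exact hF.contDiffOn_add_one (r := m) hU (hA.of_le (WithTop.coe_le_coe.2 hmr)) (ih hmr)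

theorem curvatureForm_apply_eq_zero (hF : IsParallelOn A F U) (hU : IsOpen U) {x : E}
    (hx : x ∈ U) (hA : DifferentiableAt ℝ A x) (u w : E) : curvatureForm A x u w (F x) = 0 := by
  have hflip : HasFDerivAt (fun y => (A y).flip) _ x :=
    (ContinuousLinearMap.flipₗᵢ ℝ E V V).toContinuousLinearEquiv.hasFDerivAt.comp x
      hA.hasFDerivAt
  have hsymm := second_derivative_symmetric_of_eventually_of_real
    (eventually_of_mem (hU.mem_nhds hx) hF) (hflip.clm_apply (hF x hx)) u w
  rw [curvatureForm_apply, sub_eq_zero]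
  simpa [add_comm] using hsymm

end IsParallelOn

/-- The space of parallel sections over `U` of the trivial bundle with fibre `V` and connection
`d - A`. The sections are functions on the subtype `U`, so that two sections which differ only
outside `U` are identified. -/
def parallelSections (A : E → E →L[ℝ] V →L[ℝ] V) (U : Set E) : Submodule ℝ (U → V) where
  carrier := {f | ∃ F, IsParallelOn A F U ∧ ∀ x : U, F x = f x}
  zero_mem' := ⟨0, fun x _ => by simpa using hasFDerivAt_zero x, fun _ => rfl⟩
  add_mem' := by
    rintro f g ⟨F, hF, hFf⟩ ⟨G, hG, hGg⟩
    exact ⟨F + G, hF.add hG, fun x => congrArg₂ (· + ·) (hFf x) (hGg x)⟩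
  smul_mem' := by
    rintro c f ⟨F, hF, hFf⟩
    exact ⟨c • F, hF.const_smul c, fun x => congrArg (c • ·) (hFf x)⟩

/-- The value of a parallel section at a point. -/
def parallelSectionsEval (A : E → E →L[ℝ] V →L[ℝ] V) (U : Set E) (x : U) :
    parallelSections A U →ₗ[ℝ] V :=
  LinearMap.proj x ∘ₗ (parallelSections A U).subtype

theorem parallelSectionsEval_injective (hU : IsOpen U) (hUc : IsPreconnected U)
    (hA : ContinuousOn A U) (x : U) : Function.Injective (parallelSectionsEval A U x) := by
  rintro ⟨f, F, hF, hFf⟩ ⟨g, G, hG, hGg⟩ (hfg : f x = g x)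
  have hFG : EqOn F G U := hF.eqOn_of_isPreconnected hG hU hUc hA x.2
    ((hFf x).trans (hfg.trans (hGg x).symm))
  exact Subtype.ext (funext fun y => (hFf y).symm.trans ((hFG y.2).trans (hGg y)))

theorem finrank_parallelSections_eq_iff [FiniteDimensional ℝ V] (hU : IsOpen U)
    [SimplyConnectedSpace U] (hA : ContDiffOn ℝ 1 A U) :
    Module.finrank ℝ (parallelSections A U) = Module.finrank ℝ V ↔
      ∀ x ∈ U, curvatureForm A x = 0 := by
  have : CompleteSpace V := FiniteDimensional.complete ℝ V
  have hUc : IsPreconnected U := isPreconnected_iff_preconnectedSpace.2 inferInstance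
  have hinj := parallelSectionsEval_injective hU hUc hA.continuousOn
  obtain ⟨p⟩ : Nonempty U := inferInstance
  have : FiniteDimensional ℝ (parallelSections A U) := Module.Finite.of_injective _ (hinj p)
  constructor
  · intro hrank x hx
    have hsurj := (LinearMap.injective_iff_surjective_of_finrank_eq_finrank hrank).1
      (hinj ⟨x, hx⟩)
    ext u w v
    obtain ⟨⟨f, F, hF, hFf⟩, rfl⟩ := hsurj v
    have hval : parallelSectionsEval A U ⟨x, hx⟩ ⟨f, F, hF, hFf⟩ = F x := (hFf ⟨x, hx⟩).symm
    rw [hval]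
    exact hF.curvatureForm_apply_eq_zero hU hx
      ((hA.contDiffAt (hU.mem_nhds hx)).differentiableAt one_ne_zero) u w
  · intro hflat
    have hsurj : Function.Surjective (parallelSectionsEval A U p) := fun v => by
      obtain ⟨F, hFp, hF⟩ := exists_isParallelOn_of_simplyConnected hU hA hflat p.2 v
      exact ⟨⟨fun y => F y, F, hF, fun _ => rfl⟩, hFp⟩
    exact (LinearEquiv.ofBijective _ ⟨hinj p, hsurj⟩).finrank_eq

end ParallelSectionSpace

section AffineConnection

variable {n : ℕ} {Γ : Fin n → Fin n → Fin n → (Fin n → ℝ) → ℝ} {U : Set (Fin n → ℝ)}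
  {x : Fin n → ℝ}

/-- The form `A` such that `d - A` is the connection on pairs `(f, ω)` of a function and a `1`-form
whose parallel sections satisfy `∂ᵢ f = ωᵢ` and `∂ᵢ ωⱼ = ∑ₖ Γᵏᵢⱼ ωₖ`, so that `f` is affine. -/
noncomputable def affineForm (Γ : Fin n → Fin n → Fin n → (Fin n → ℝ) → ℝ) (x : Fin n → ℝ) :
    (Fin n → ℝ) →L[ℝ] (ℝ × (Fin n → ℝ)) →L[ℝ] (ℝ × (Fin n → ℝ)) :=
  LinearMap.toContinuousBilinearMap <| LinearMap.mk₂ ℝ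
    (fun u v => (∑ i, u i * v.2 i, fun j => ∑ i, ∑ k, u i * Γ k i j x * v.2 k))
    (fun _ _ _ => by ext <;> simp [add_mul, Finset.sum_add_distrib])
    (fun _ _ _ => by ext <;> simp [Finset.mul_sum, mul_assoc])
    (fun _ _ _ => by ext <;> simp [mul_add, Finset.sum_add_distrib])
    (fun _ _ _ => by ext <;> simp [Finset.mul_sum, mul_left_comm])

theorem affineForm_apply (u : Fin n → ℝ) (v : ℝ × (Fin n → ℝ)) :
    affineForm Γ x u v = (∑ i, u i * v.2 i, fun j => ∑ i, ∑ k, u i * Γ k i j x * v.2 k) :=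
  rfl

theorem affineForm_single_apply (i : Fin n) (v : ℝ × (Fin n → ℝ)) :
    affineForm Γ x (Pi.single i 1) v = (v.2 i, fun j => ∑ k, Γ k i j x * v.2 k) := by
  simp [affineForm_apply, Pi.single_apply]

theorem contDiffOn_affineForm {r : WithTop ℕ∞} (hΓ : ∀ k i j, ContDiffOn ℝ r (Γ k i j) U) :
    ContDiffOn ℝ r (affineForm Γ) U := by
  refine contDiffOn_clm_apply.2 fun u => contDiffOn_clm_apply.2 fun v => ?_
  simp only [affineForm_apply]
  fun_prop

theorem fderiv_affineForm_single_apply (hA : DifferentiableAt ℝ (affineForm Γ) x) (i j : Fin n)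
    (v : ℝ × (Fin n → ℝ)) :
    fderiv ℝ (affineForm Γ) x (Pi.single i 1) (Pi.single j 1) v =
      (0, fun l => ∑ k, pd i (Γ k j l) x * v.2 k) := by
  have happly := fun w : ℝ × (Fin n → ℝ) =>
    (hA.hasFDerivAt.clm_apply (hasFDerivAt_const (Pi.single j 1) x)).clm_apply
      (hasFDerivAt_const w x)
  have hΓ : ∀ k l, DifferentiableAt ℝ (Γ k j l) x := fun k l => by
    have hcov := (happly (0, Pi.single k 1)).differentiableAt.snd
    simpa [affineForm_single_apply, Pi.single_apply] using differentiableAt_pi.1 hcov l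
  have hcomponents := (hasFDerivAt_const (v.2 j) x).prodMk (hasFDerivAt_pi.2 fun l =>
    HasFDerivAt.fun_sum (u := Finset.univ) fun k _ => (hΓ k l).hasFDerivAt.mul_const (v.2 k))
  simp only [affineForm_single_apply] at happly
  have hunique := DFunLike.congr_fun ((happly v).unique hcomponents) (Pi.single i 1)
  simpa [pd, mul_comm] using hunique

theorem clm_ext_single {W : Type*} [AddCommMonoid W] [Module ℝ W] [TopologicalSpace W]
    {f g : (Fin n → ℝ) →L[ℝ] W} (h : ∀ i, f (Pi.single i 1) = g (Pi.single i 1)) : f = g :=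
  ContinuousLinearMap.coe_injective ((Pi.basisFun ℝ (Fin n)).ext (by simpa using h))

theorem curvatureForm_affineForm_single_apply (hA : DifferentiableAt ℝ (affineForm Γ) x)
    (hsymm : ∀ k i j, Γ k i j x = Γ k j i x) (i j : Fin n) (v : ℝ × (Fin n → ℝ)) :
    curvatureForm (affineForm Γ) x (Pi.single i 1) (Pi.single j 1) v =
      (0, fun l => ∑ k, curv Γ k l i j x * v.2 k) := by
  have hproduct : ∀ i j l, ∑ m, Γ m j l x * ∑ k, Γ k i m x * v.2 k =
      ∑ k, (∑ m, Γ k i m x * Γ m j l x) * v.2 k := fun i j l => by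
    simp only [Finset.mul_sum, Finset.sum_mul]
    rw [Finset.sum_comm]
    exact Finset.sum_congr rfl fun k _ => Finset.sum_congr rfl fun m _ => by ring
  rw [curvatureForm_apply]
  simp only [fderiv_affineForm_single_apply hA, affineForm_single_apply, hproduct]
  refine Prod.ext (by simp [hsymm _ i j]) (funext fun l => ?_)
  simp only [Prod.snd_sub, Prod.snd_add, Pi.sub_apply, Pi.add_apply, curv,
    ← Finset.sum_add_distrib, ← Finset.sum_sub_distrib]
  exact Finset.sum_congr rfl fun k _ => by
    rw [Finset.sum_sub_distrib]
    ring

theorem curvatureForm_affineForm_eq_zero_iff (hA : DifferentiableAt ℝ (affineForm Γ) x)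
    (hsymm : ∀ k i j, Γ k i j x = Γ k j i x) :
    curvatureForm (affineForm Γ) x = 0 ↔ ∀ k l i j, curv Γ k l i j x = 0 := by
  have happly := curvatureForm_affineForm_single_apply hA hsymm
  refine ⟨fun h k l i j => ?_, fun h => ?_⟩
  · have hk := happly i j (0, Pi.single k 1)
    rw [h] at hk
    simpa [Pi.single_apply] using (congrFun (congrArg Prod.snd hk) l).symm
  · refine clm_ext_single fun i => clm_ext_single fun j => ContinuousLinearMap.ext fun v => ?_
    rw [happly]
    simp only [h, zero_mul, Finset.sum_const_zero]
    rfl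

end AffineConnection

section AffineFunctions

open Set

variable {n : ℕ} {Γ : Fin n → Fin n → Fin n → (Fin n → ℝ) → ℝ} {U : Set (Fin n → ℝ)}
  {f g : (Fin n → ℝ) → ℝ} {x : Fin n → ℝ}

/-- The `1`-jet of a function: its value together with its partial derivatives. -/
noncomputable def jet (f : (Fin n → ℝ) → ℝ) (x : Fin n → ℝ) : ℝ × (Fin n → ℝ) :=
  (f x, fun k => fderiv ℝ f x (Pi.single k 1))

theorem jet_add (hf : DifferentiableAt ℝ f x) (hg : DifferentiableAt ℝ g x) :
    jet (f + g) x = jet f x + jet g x := by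
  simp only [jet, fderiv_add hf hg]
  rfl

theorem jet_const_smul (hf : DifferentiableAt ℝ f x) (c : ℝ) : jet (c • f) x = c • jet f x := by
  simp only [jet, fderiv_const_smul hf]
  rfl

theorem hasFDerivAt_fderiv_single (hf : ContDiffAt ℝ 2 f x) (j : Fin n) :
    HasFDerivAt (fun y => fderiv ℝ f y (Pi.single j 1))
      ((fderiv ℝ (fderiv ℝ f) x).flip (Pi.single j 1)) x := by
  have hf' : DifferentiableAt ℝ (fderiv ℝ f) x :=
    (hf.fderiv_right (m := 1) (by norm_num)).differentiableAt one_ne_zero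
  simpa using hf'.hasFDerivAt.clm_apply (hasFDerivAt_const (Pi.single j 1) x)

theorem hasFDerivAt_jet (hf : ContDiffAt ℝ 2 f x) :
    HasFDerivAt (jet f) ((fderiv ℝ f x).prod
      (ContinuousLinearMap.pi fun j => (fderiv ℝ (fderiv ℝ f) x).flip (Pi.single j 1))) x :=
  (hf.differentiableAt two_ne_zero).hasFDerivAt.prodMk
    (hasFDerivAt_pi.2 (hasFDerivAt_fderiv_single hf))

theorem dsym_differential (hf : ContDiffAt ℝ 2 f x) (i j : Fin n) :
    dsym Γ (fun y k => fderiv ℝ f y (Pi.single k 1)) i j x =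
      fderiv ℝ (fderiv ℝ f) x (Pi.single i 1) (Pi.single j 1) -
        ∑ k, Γ k i j x * fderiv ℝ f x (Pi.single k 1) := by
  have hsymm : IsSymmSndFDerivAt ℝ f x := hf.isSymmSndFDerivAt (by simp)
  simp only [dsym, pd, (hasFDerivAt_fderiv_single hf _).fderiv, ContinuousLinearMap.flip_apply,
    hsymm.eq (Pi.single j 1) (Pi.single i 1), add_self_div_two]

/-- `f` is an affine function for `Γ` on `U`, of the least regularity for which this makes
sense. -/
def IsAffineOn (Γ : Fin n → Fin n → Fin n → (Fin n → ℝ) → ℝ) (U : Set (Fin n → ℝ))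
    (f : (Fin n → ℝ) → ℝ) : Prop :=
  ContDiffOn ℝ 2 f U ∧
    ∀ x ∈ U, ∀ i j, dsym Γ (fun y k => fderiv ℝ f y (Pi.single k 1)) i j x = 0

theorem isAffineOn_iff_isParallelOn_jet (hU : IsOpen U) :
    IsAffineOn Γ U f ↔ ContDiffOn ℝ 2 f U ∧ IsParallelOn (affineForm Γ) (jet f) U := by
  refine and_congr_right fun hf => forall₂_congr fun x hx => ?_
  have hfx := hf.contDiffAt (hU.mem_nhds hx)
  have hder : HasFDerivAt (jet f) ((affineForm Γ x).flip (jet f x)) x ↔ _ = _ :=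
    ⟨fun h => (hasFDerivAt_jet hfx).unique h, (hasFDerivAt_jet hfx).congr_fderiv⟩
  rw [hder]
  refine Iff.trans ?_ ⟨clm_ext_single, fun h i => DFunLike.congr_fun h (Pi.single i 1)⟩
  simp [dsym_differential hfx, affineForm_single_apply, jet, funext_iff, sub_eq_zero]

theorem IsParallelOn.jet_fst_eqOn {F : (Fin n → ℝ) → ℝ × (Fin n → ℝ)}
    (hF : IsParallelOn (affineForm Γ) F U) : EqOn (jet fun y => (F y).1) F U := fun x hx =>
  Prod.ext rfl (funext fun k => by simp [jet, (hF x hx).fst.fderiv, affineForm_single_apply])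

theorem IsParallelOn.isAffineOn_fst {F : (Fin n → ℝ) → ℝ × (Fin n → ℝ)}
    (hF : IsParallelOn (affineForm Γ) F U) (hU : IsOpen U)
    (hΓ : ∀ k i j, ContDiffOn ℝ 1 (Γ k i j) U) : IsAffineOn Γ U fun y => (F y).1 := by
  have hF2 : ContDiffOn ℝ (1 + 1) F U := hF.contDiffOn (r := 1) hU (contDiffOn_affineForm hΓ)
  rw [one_add_one_eq_two] at hF2
  exact (isAffineOn_iff_isParallelOn_jet hU).2 ⟨hF2.fst, hF.congr hU hF.jet_fst_eqOn⟩

namespace IsAffineOn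

theorem isParallelOn_jet (hf : IsAffineOn Γ U f) (hU : IsOpen U) :
    IsParallelOn (affineForm Γ) (jet f) U :=
  ((isAffineOn_iff_isParallelOn_jet hU).1 hf).2

theorem differentiableAt (hf : IsAffineOn Γ U f) (hU : IsOpen U) (hx : x ∈ U) :
    DifferentiableAt ℝ f x :=
  (hf.1.contDiffAt (hU.mem_nhds hx)).differentiableAt two_ne_zero

theorem add (hf : IsAffineOn Γ U f) (hg : IsAffineOn Γ U g) (hU : IsOpen U) :
    IsAffineOn Γ U (f + g) :=
  (isAffineOn_iff_isParallelOn_jet hU).2 ⟨hf.1.add hg.1,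
    ((hf.isParallelOn_jet hU).add (hg.isParallelOn_jet hU)).congr hU fun _ hx =>
      jet_add (hf.differentiableAt hU hx) (hg.differentiableAt hU hx)⟩

theorem const_smul (hf : IsAffineOn Γ U f) (hU : IsOpen U) (c : ℝ) : IsAffineOn Γ U (c • f) :=
  (isAffineOn_iff_isParallelOn_jet hU).2 ⟨hf.1.const_smul c,
    ((hf.isParallelOn_jet hU).const_smul c).congr hU fun _ hx =>
      jet_const_smul (hf.differentiableAt hU hx) c⟩

theorem contDiffOn (hf : IsAffineOn Γ U f) (hU : IsOpen U) {r : ℕ∞}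
    (hΓ : ∀ k i j, ContDiffOn ℝ r (Γ k i j) U) : ContDiffOn ℝ (r + 1) f U :=
  ((hf.isParallelOn_jet hU).contDiffOn hU (contDiffOn_affineForm hΓ)).fst

end IsAffineOn

/-- The space of affine functions for `Γ` on `U`, as functions on the subtype `U`. -/
def affineFunctions (Γ : Fin n → Fin n → Fin n → (Fin n → ℝ) → ℝ) {U : Set (Fin n → ℝ)}
    (hU : IsOpen U) : Submodule ℝ (U → ℝ) where
  carrier := {f | ∃ g, IsAffineOn Γ U g ∧ ∀ x : U, g x = f x}
  zero_mem' := ⟨0, ⟨contDiffOn_const, fun x _ i j => by simp [dsym, pd]⟩, fun _ => rfl⟩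
  add_mem' := by
    rintro f f' ⟨g, hg, hgf⟩ ⟨g', hg', hgf'⟩
    exact ⟨g + g', hg.add hg' hU, fun x => congrArg₂ (· + ·) (hgf x) (hgf' x)⟩
  smul_mem' := by
    rintro c f ⟨g, hg, hgf⟩
    exact ⟨c • g, hg.const_smul hU c, fun x => congrArg (c • ·) (hgf x)⟩

theorem affineFunctions_eq_map_fst (hU : IsOpen U) (hΓ : ∀ k i j, ContDiffOn ℝ 1 (Γ k i j) U) :
    affineFunctions Γ hU =
      (parallelSections (affineForm Γ) U).map ((LinearMap.fst ℝ ℝ (Fin n → ℝ)).compLeft U) := by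
  ext f
  constructor
  · rintro ⟨g, hg, hgf⟩
    exact ⟨fun x => jet g x, ⟨jet g, hg.isParallelOn_jet hU, fun _ => rfl⟩, funext hgf⟩
  · rintro ⟨s, ⟨F, hF, hFs⟩, rfl⟩
    exact ⟨fun x => (F x).1, hF.isAffineOn_fst hU hΓ, fun x => congrArg Prod.fst (hFs x)⟩

theorem fst_injOn_parallelSections (hU : IsOpen U) :
    InjOn ((LinearMap.fst ℝ ℝ (Fin n → ℝ)).compLeft U) (parallelSections (affineForm Γ) U) := by
  rintro s ⟨F, hF, hFs⟩ t ⟨G, hG, hGt⟩ hst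
  have hfst : EqOn (fun y => (F y).1) (fun y => (G y).1) U := fun y hy =>
    (congrArg Prod.fst (hFs ⟨y, hy⟩)).trans
      ((congrFun hst ⟨y, hy⟩).trans (congrArg Prod.fst (hGt ⟨y, hy⟩)).symm)
  have hjet : EqOn (jet fun y => (F y).1) (jet fun y => (G y).1) U := fun y hy => by
    have hev := hfst.eventuallyEq_of_mem (hU.mem_nhds hy)
    simp only [jet, hfst hy, hev.fderiv_eq]
  funext x
  rw [← hFs, ← hGt, ← hF.jet_fst_eqOn x.2, hjet x.2, hG.jet_fst_eqOn x.2]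

theorem finrank_affineFunctions (hU : IsOpen U) (hΓ : ∀ k i j, ContDiffOn ℝ 1 (Γ k i j) U) :
    Module.finrank ℝ (affineFunctions Γ hU) =
      Module.finrank ℝ (parallelSections (affineForm Γ) U) := by
  rw [affineFunctions_eq_map_fst hU hΓ, ← LinearMap.range_domRestrict]
  exact LinearMap.finrank_range_of_inj (fst_injOn_parallelSections hU).injective


theorem mem_affineFunctions_iff_contDiffOn_infty (hU : IsOpen U)
    (hΓ : ∀ k i j, ContDiffOn ℝ (⊤ : ℕ∞) (Γ k i j) U) (f : U → ℝ) :
    f ∈ affineFunctions Γ hU ↔ ∃ g : (Fin n → ℝ) → ℝ, (ContDiffOn ℝ (⊤ : ℕ∞) g U ∧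
      ∀ x ∈ U, ∀ i j, dsym Γ (fun y k => fderiv ℝ g y (Pi.single k 1)) i j x = 0) ∧
      ∀ x : U, g x = f x :=
  exists_congr fun _ => and_congr_left fun _ =>
    ⟨fun hg => ⟨(hg.contDiffOn hU hΓ).of_le le_self_add, hg.2⟩,
      fun hg => ⟨contDiffOn_infty.1 hg.1 2, hg.2⟩⟩

end AffineFunctions

section Finrank

open Module

variable {K X : Type*} [Field K] {U : Set X} {N : ℕ} {S : Submodule K (U → K)}

theorem coe_sum_smul_apply {ι : Type*} [Fintype ι] {b : ι → S} {f : ι → X → K}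
    (hbf : ∀ m (x : U), f m x = (b m : U → K) x) (c : ι → K) (x : U) :
    ((∑ m, c m • b m : S) : U → K) x = ∑ m, c m * f m x := by
  simp [hbf]

theorem finrank_eq_succ_iff_exists_functions {P : (X → K) → Prop}
    (hS : ∀ f, f ∈ S ↔ ∃ g, P g ∧ ∀ x : U, g x = f x) :
    finrank K S = N + 1 ↔ ∃ f : Fin (N + 1) → X → K, (∀ m, P (f m)) ∧
      (∀ c : Fin (N + 1) → K, (∀ x ∈ U, ∑ m, c m * f m x = 0) → c = 0) ∧
      ∀ g, P g → ∃ c : Fin (N + 1) → K, ∀ x ∈ U, g x = ∑ m, c m * f m x := by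
  constructor
  · intro hrank
    have := finite_of_finrank_eq_succ hrank
    let b := finBasisOfFinrankEq K S hrank
    choose f hf hfb using fun m => (hS (b m)).1 (b m).2
    have hsum := coe_sum_smul_apply hfb
    refine ⟨f, hf, fun c hc => ?_, fun g hg => ?_⟩
    · have hzero : ∑ m, c m • b m = 0 :=
        Subtype.ext (funext fun x => (hsum c x).trans (hc x x.2))
      exact funext (Fintype.linearIndependent_iff.1 b.linearIndependent c hzero)
    · let s : S := ⟨fun x => g x, (hS _).2 ⟨g, hg, fun _ => rfl⟩⟩
      refine ⟨b.repr s, fun x hx => ?_⟩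
      rw [← hsum _ ⟨x, hx⟩, b.sum_repr]
  · rintro ⟨f, hf, hindep, hspan⟩
    let b : Fin (N + 1) → S := fun m => ⟨fun x => f m x, (hS _).2 ⟨f m, hf m, fun _ => rfl⟩⟩
    have hsum := coe_sum_smul_apply (b := b) (f := f) fun _ _ => rfl
    have hb : LinearIndependent K b := Fintype.linearIndependent_iff.2 fun c hc =>
      congrFun (hindep c fun x hx => by rw [← hsum c ⟨x, hx⟩, hc]; rfl)
    have hb' : ⊤ ≤ Submodule.span K (Set.range b) := fun s _ => by
      obtain ⟨g, hg, hgs⟩ := (hS s).1 s.2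
      obtain ⟨c, hc⟩ := hspan g hg
      exact (Submodule.mem_span_range_iff_exists_fun K).2 ⟨c, Subtype.ext (funext fun x => by
        rw [hsum, ← hc x x.2, hgs])⟩
    rw [finrank_eq_card_basis (Basis.mk hb hb'), Fintype.card_fin]

end Finrank

theorem statement15_general {n : ℕ} {U : Set (Fin n → ℝ)} (hU : IsOpen U) [SimplyConnectedSpace U]
    {Γ : Fin n → Fin n → Fin n → (Fin n → ℝ) → ℝ} (hΓ : ∀ k i j, ContDiffOn ℝ 1 (Γ k i j) U)
    (hsymm : ∀ x ∈ U, ∀ k i j, Γ k i j x = Γ k j i x) :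
    Module.finrank ℝ (affineFunctions Γ hU) = n + 1 ↔
      ∀ x ∈ U, ∀ k l i j, curv Γ k l i j x = 0 := by
  have hA := contDiffOn_affineForm hΓ
  have hrank : n + 1 = Module.finrank ℝ (ℝ × (Fin n → ℝ)) := by simp [add_comm]
  rw [finrank_affineFunctions hU hΓ, hrank, finrank_parallelSections_eq_iff hU hA]
  exact forall₂_congr fun x hx => curvatureForm_affineForm_eq_zero_iff
    ((hA.contDiffAt (hU.mem_nhds hx)).differentiableAt one_ne_zero) (hsymm x hx)

/-- on a connected simply connected open set `U`, the space of affine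
functions of a torsion-free connection `Γ` has dimension `n + 1` (expressed by the
existence of `n + 1` affine functions, linearly independent on `U`, spanning all affine
functions on `U`) iff `Γ` is flat, i.e. its curvature vanishes identically on `U`. -/
theorem statement15 {n : ℕ} (hn : 2 ≤ n)
    (U : Set (Fin n → ℝ)) (hU : IsOpen U) (hUconn : IsConnected U)
    (hUsc : SimplyConnectedSpace U)
    (Γ : Fin n → Fin n → Fin n → (Fin n → ℝ) → ℝ) (hΓ : IsTorsionFreeConn U Γ) :
    (∃ f : Fin (n + 1) → (Fin n → ℝ) → ℝ,
      (∀ m, ContDiffOn ℝ (⊤ : ℕ∞) (f m) U ∧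
        ∀ x ∈ U, ∀ i j,
          dsym Γ (fun y k => fderiv ℝ (f m) y (Pi.single k 1)) i j x = 0) ∧
      (∀ c : Fin (n + 1) → ℝ, (∀ x ∈ U, (∑ m, c m * f m x) = 0) → c = 0) ∧
      (∀ g : (Fin n → ℝ) → ℝ, ContDiffOn ℝ (⊤ : ℕ∞) g U →
        (∀ x ∈ U, ∀ i j,
          dsym Γ (fun y k => fderiv ℝ g y (Pi.single k 1)) i j x = 0) →
        ∃ c : Fin (n + 1) → ℝ, ∀ x ∈ U, g x = ∑ m, c m * f m x)) ↔
    (∀ x ∈ U, ∀ k l i j, curv Γ k l i j x = 0) := by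
  simpa only [and_imp] using (finrank_eq_succ_iff_exists_functions
    (mem_affineFunctions_iff_contDiffOn_infty hU hΓ.1)).symm.trans
      (statement15_general hU (fun k i j => contDiffOn_infty.1 (hΓ.1 k i j) 1)
        fun x _ k i j => hΓ.2 k i j x)
end
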